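/- arXiv:2504.08717 — 3 statements merged into one kernel-verified Lean document; each statement's English description precedes it below -/
import Mathlib

section
/- Let Γ = Γ_{E_6} and R = ℂ[u,v]^Γ. Then: (i) there exist anti-Poisson involutions θ₁, θ₂ of R satisfying θ₁(x)=−x, θ₁(y)=y, θ₁(z)=z; θ₂(x)=x, θ₂(y)=y, θ₂(z)=−z−x²; (ii) every anti-Poisson involution of R is conjugate by a graded Poisson automorphism to θ₁ or θ₂; (iii) θ₁ and θ₂ are not conjugate. -/
/-!
The proof determines the invariant ring `R` and then computes with its generators `x, y, z`.

Generation is by division by `x`. Let `f ∈ R` be homogeneous of degree `d`. If `f (1, 0) ≠ 0`, then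
`4 ∣ d` because `diag(i, -i) ∈ Γ`, and `d ≠ 4` because averaging a quartic over the six points of the
orbit of `(1 : 0)` shows that a quartic invariant vanishes there (`quartic_eval`). Hence
`d = 8a + 12b`, and subtracting a multiple of `y ^ a z ^ b` makes `f` vanish at `(1 : 0)`. The result
is divisible by `v`, hence by every linear form in the `Γ`-orbit of `v`, hence by their product, which
is `x` (`fX_dvd`). The quotient is invariant of degree `d - 6`, and one recurses (`red`,
`mem_adjoin`). The same step shows that the graded pieces of degree 6, 8, 12 are spanned by `x`, by
`y`, and by `z, x²` (`deg6`, `deg8`, `deg12`).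

A graded automorphism therefore has the form `x ↦ a x`, `y ↦ b y`, `z ↦ c z + e x²`. For an
anti-Poisson one, `{x, y} = 8z + 4x²` and `4z² + 4zx² + 433x⁴ + 4y³ = 0` leave only two choices, which
are the values of `θ₁` and `θ₂` (`antiPoisson_vals`). So every anti-Poisson involution is equal to
`θ₁` or `θ₂`. Both exist: they are induced by involutions `u ↦ e v`, `v ↦ e⁻¹ u` of determinant `-1`,
with `e = 1` and with `e` a primitive eighth root of unity (`exists_antiPoisson`). They are not
conjugate, since a graded automorphism scales `x`, while `θ₁ x = -x` and `θ₂ x = x`.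
-/


open MvPolynomial Complex Matrix

noncomputable section

abbrev P2 : Type := MvPolynomial (Fin 2) ℂ

/-- The standard Poisson bracket on `ℂ[u,v]`, where `u = X 0`, `v = X 1`. -/
def pb (f g : P2) : P2 :=
  pderiv 0 f * pderiv 1 g - pderiv 1 f * pderiv 0 g

/-- The algebra endomorphism of `ℂ[u,v]` given by the linear substitution
`X i ↦ ∑ j, m i j • X j`. -/
def matSub (m : Matrix (Fin 2) (Fin 2) ℂ) : P2 →ₐ[ℂ] P2 :=
  aeval fun i => ∑ j, MvPolynomial.C (m i j) * X j

abbrev SL2 : Type := Matrix.SpecialLinearGroup (Fin 2) ℂ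

/-- The action of `g ∈ SL₂(ℂ)` on polynomials: `(g · f)(w) = f (g⁻¹ w)`. -/
def slAct (g : SL2) : P2 →ₐ[ℂ] P2 := matSub (↑(g⁻¹))

/-- The invariant ring `ℂ[u,v]^Γ` as a subalgebra of `ℂ[u,v]`. -/
def invRing (Γ : Subgroup SL2) : Subalgebra ℂ P2 :=
  ⨅ g : Γ, AlgHom.equalizer (slAct (g : SL2)) (AlgHom.id ℂ P2)

/-- `θ` is a graded algebra automorphism: it preserves homogeneous elements of each degree. -/
def IsGradedAut (Γ : Subgroup SL2) (θ : invRing Γ ≃ₐ[ℂ] invRing Γ) : Prop :=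
  ∀ (d : ℕ) (f : invRing Γ), (f : P2).IsHomogeneous d → ((θ f : invRing Γ) : P2).IsHomogeneous d

/-- `θ` is an anti-Poisson involution: a graded algebra automorphism with `θ ∘ θ = id`
and `θ {f, g} = -{θ f, θ g}` (the bracket condition is stated on underlying polynomials,
for every element `h` of the invariant ring whose underlying polynomial is `{f, g}`). -/
def IsAntiPoissonInv (Γ : Subgroup SL2) (θ : invRing Γ ≃ₐ[ℂ] invRing Γ) : Prop :=
  IsGradedAut Γ θ ∧ (∀ f, θ (θ f) = f) ∧
    ∀ f g h : invRing Γ, (h : P2) = pb (f : P2) (g : P2) →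
      ((θ h : invRing Γ) : P2) = - pb ((θ f : invRing Γ) : P2) ((θ g : invRing Γ) : P2)

/-- `σ` is a graded Poisson automorphism. -/
def IsGradedPoissonAut (Γ : Subgroup SL2) (σ : invRing Γ ≃ₐ[ℂ] invRing Γ) : Prop :=
  IsGradedAut Γ σ ∧
    ∀ f g h : invRing Γ, (h : P2) = pb (f : P2) (g : P2) →
      ((σ h : invRing Γ) : P2) = pb ((σ f : invRing Γ) : P2) ((σ g : invRing Γ) : P2)

/-- `θ'` is conjugate to `θ` by a graded Poisson automorphism: `θ' = σ ∘ θ ∘ σ⁻¹`. -/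
def APIConj (Γ : Subgroup SL2) (θ θ' : invRing Γ ≃ₐ[ℂ] invRing Γ) : Prop :=
  ∃ σ : invRing Γ ≃ₐ[ℂ] invRing Γ, IsGradedPoissonAut Γ σ ∧ ∀ f, θ' f = σ (θ (σ.symm f))

/-- `θ` takes the values `x' y' z'` on `x y z`. -/
def Vals (Γ : Subgroup SL2) (θ : invRing Γ ≃ₐ[ℂ] invRing Γ)
    (x y z x' y' z' : invRing Γ) : Prop :=
  θ x = x' ∧ θ y = y' ∧ θ z = z'

/-- The ideal `J_θ` generated by all `θ f - f`. -/
def Jideal (Γ : Subgroup SL2) (θ : invRing Γ ≃ₐ[ℂ] invRing Γ) : Ideal (invRing Γ) :=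
  Ideal.span (Set.range fun f => θ f - f)

/-! ### The invariants and the group -/

/-- The degree 6 invariant `uv(u⁴ - v⁴)`. -/
def fX : P2 := (X 0 : P2) * X 1 * ((X 0 : P2) ^ 4 - (X 1 : P2) ^ 4)

/-- The degree 8 invariant `-(u⁸ + 14u⁴v⁴ + v⁸)`. -/
def fY : P2 := -((X 0 : P2) ^ 8 + 14 * (X 0 : P2) ^ 4 * (X 1 : P2) ^ 4 + (X 1 : P2) ^ 8)

/-- The degree 12 invariant `z`, normalised as in the theorem. -/
def fZ : P2 := (X 0 : P2) ^ 12 - 33 * (X 0 : P2) ^ 8 * (X 1 : P2) ^ 4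
        - 33 * (X 0 : P2) ^ 4 * (X 1 : P2) ^ 8 + (X 1 : P2) ^ 12
        - MvPolynomial.C ((1/2) : ℂ) *
            ((X 0 : P2) ^ 2 * (X 1 : P2) ^ 2 * ((X 0 : P2) ^ 4 - (X 1 : P2) ^ 4) ^ 2)

/-- What the argument uses about `Γ`: invariance of `f` under the substitutions by the inverses of the
three generators and by the third generator itself (written with `1 / (1 - i) = (1 + i) / 2`), and
the invariance of `x, y, z`. -/
structure E6Data (Γ : Subgroup SL2) : Prop where
  inv1 : ∀ f ∈ invRing Γ, matSub !![-I, 0; 0, I] f = f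
  inv2 : ∀ f ∈ invRing Γ, matSub !![0, -I; -I, 0] f = f
  inv3 : ∀ f ∈ invRing Γ, matSub (((1 + I) / 2) • !![-I, -I; -1, 1]) f = f
  inv4 : ∀ f ∈ invRing Γ, matSub (((1 + I) / 2) • !![1, I; 1, -I]) f = f
  hx : fX ∈ invRing Γ
  hy : fY ∈ invRing Γ
  hz : fZ ∈ invRing Γ

lemma mem_invRing {Γ : Subgroup SL2} {f : P2} :
    f ∈ invRing Γ ↔ ∀ g ∈ Γ, slAct g f = f := by
  simp [invRing, Algebra.mem_iInf, AlgHom.mem_equalizer]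

lemma inv_one_sub_I : (1 / (1 - I) : ℂ) = (1 + I) / 2 := by
  have h : (1 - I : ℂ) ≠ 0 := fun h => by simpa using congrArg Complex.re h
  rw [div_eq_div_iff h two_ne_zero]
  linear_combination I_mul_I

lemma e6Data {Γ : Subgroup SL2} {g₁ g₂ g₃ : SL2}
    (hg₁ : (g₁ : Matrix (Fin 2) (Fin 2) ℂ) = !![I, 0; 0, -I])
    (hg₂ : (g₂ : Matrix (Fin 2) (Fin 2) ℂ) = !![0, I; I, 0])
    (hg₃ : (g₃ : Matrix (Fin 2) (Fin 2) ℂ) = (1 / (1 - I)) • !![1, I; 1, -I])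
    (hΓ : Γ = Subgroup.closure {g₁, g₂, g₃})
    (hx : fX ∈ invRing Γ) (hy : fY ∈ invRing Γ) (hz : fZ ∈ invRing Γ) : E6Data Γ := by
  have h1 : g₁ ∈ Γ := hΓ ▸ Subgroup.subset_closure (by simp)
  have h2 : g₂ ∈ Γ := hΓ ▸ Subgroup.subset_closure (by simp)
  have h3 : g₃ ∈ Γ := hΓ ▸ Subgroup.subset_closure (by simp)
  rw [inv_one_sub_I] at hg₃
  have key : ∀ g ∈ Γ, ∀ m : Matrix (Fin 2) (Fin 2) ℂ,
      ((g⁻¹ : SL2) : Matrix (Fin 2) (Fin 2) ℂ) = m → ∀ f ∈ invRing Γ, matSub m f = f := by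
    rintro g hg m rfl f hf
    exact mem_invRing.1 hf g hg
  refine ⟨key g₁ h1 _ ?_, key g₂ h2 _ ?_, key g₃ h3 _ ?_, key g₃⁻¹ (inv_mem h3) _ ?_, hx, hy, hz⟩
  · rw [Matrix.SpecialLinearGroup.coe_inv, hg₁, Matrix.adjugate_fin_two_of, neg_zero]
  · rw [Matrix.SpecialLinearGroup.coe_inv, hg₂, Matrix.adjugate_fin_two_of]
  · rw [Matrix.SpecialLinearGroup.coe_inv, hg₃, Matrix.adjugate_fin_two]; simp
  · rw [inv_inv, hg₃]

/-! ### Linear substitutions and homogeneity -/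

lemma matSub_X0 (a b c d : ℂ) :
    matSub !![a, b; c, d] (X 0) = MvPolynomial.C a * X 0 + MvPolynomial.C b * X 1 := by
  simp [matSub, Fin.sum_univ_two]

lemma matSub_X1 (a b c d : ℂ) :
    matSub !![a, b; c, d] (X 1) = MvPolynomial.C c * X 0 + MvPolynomial.C d * X 1 := by
  simp [matSub, Fin.sum_univ_two]

lemma eval_matSub (m : Matrix (Fin 2) (Fin 2) ℂ) (w : Fin 2 → ℂ) (f : P2) :
    eval w (matSub m f) = eval (m *ᵥ w) f := by
  have : (eval w).comp (matSub m : P2 →+* P2) = eval (m *ᵥ w) := by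
    apply MvPolynomial.ringHom_ext
    · intro r; simp
    · intro i; fin_cases i <;> simp [matSub]
  exact RingHom.congr_fun this f

lemma matSub_homog (m : Matrix (Fin 2) (Fin 2) ℂ) {f : P2} {d : ℕ} (hf : f.IsHomogeneous d) :
    (matSub m f).IsHomogeneous d := by
  have := hf.aeval (fun i => ∑ j, MvPolynomial.C (m i j) * (X j : P2)) (n := 1) fun i =>
    IsHomogeneous.sum _ _ _ fun j _ => isHomogeneous_C_mul_X _ _
  rwa [one_mul] at this

/-- Linear substitutions commute with taking homogeneous components, so the invariant ring is graded. -/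
lemma matSub_component (m : Matrix (Fin 2) (Fin 2) ℂ) (f : P2) (n : ℕ) :
    matSub m (homogeneousComponent n f) = homogeneousComponent n (matSub m f) := by
  conv_rhs => rw [← sum_homogeneousComponent f, map_sum, map_sum]
  have h : ∀ i, homogeneousComponent n (matSub m (homogeneousComponent i f)) =
      if i = n then matSub m (homogeneousComponent i f) else 0 := fun i => by
    rw [homogeneousComponent_of_mem (matSub_homog m (homogeneousComponent_isHomogeneous i f))]
    simp [eq_comm]
  simp only [h, Finset.sum_ite_eq', Finset.mem_range]
  split_ifs with hn
  · rfl
  · rw [homogeneousComponent_eq_zero _ _ (by omega), map_zero]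

lemma component_mem {Γ : Subgroup SL2} {f : P2} (hf : f ∈ invRing Γ) (n : ℕ) :
    homogeneousComponent n f ∈ invRing Γ := by
  rw [mem_invRing] at hf ⊢
  intro g hg
  rw [slAct, matSub_component]
  exact congrArg _ (hf g hg)

/-! ### The forms `x`, `y`, `z` -/

lemma fX_homog : fX.IsHomogeneous 6 :=
  ((isHomogeneous_X _ _).mul (isHomogeneous_X _ _)).mul
    ((isHomogeneous_X_pow _ _).sub (isHomogeneous_X_pow _ _))

lemma fY_homog : fY.IsHomogeneous 8 := by
  have h14 : (14 : P2) = MvPolynomial.C 14 := (map_ofNat _ _).symm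
  unfold fY
  rw [h14]
  exact (((isHomogeneous_X_pow _ _).add
    (((isHomogeneous_X_pow _ _).C_mul _).mul (isHomogeneous_X_pow _ _))).add
    (isHomogeneous_X_pow _ _)).neg

lemma fZ_homog : fZ.IsHomogeneous 12 := by
  have h33 : (33 : P2) = MvPolynomial.C 33 := (map_ofNat _ _).symm
  unfold fZ
  rw [h33]
  refine IsHomogeneous.sub (IsHomogeneous.add (IsHomogeneous.sub (IsHomogeneous.sub ?_ ?_) ?_) ?_) ?_
  · exact isHomogeneous_X_pow _ _
  · exact ((isHomogeneous_X_pow _ _).C_mul _).mul (isHomogeneous_X_pow _ _)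
  · exact ((isHomogeneous_X_pow _ _).C_mul _).mul (isHomogeneous_X_pow _ _)
  · exact isHomogeneous_X_pow _ _
  · exact (((isHomogeneous_X_pow _ _).mul (isHomogeneous_X_pow _ _)).mul
      (((isHomogeneous_X_pow _ _).sub (isHomogeneous_X_pow _ _)).pow 2)).C_mul _

lemma eval_fX (w : Fin 2 → ℂ) : eval w fX = w 0 * w 1 * (w 0 ^ 4 - w 1 ^ 4) := by simp [fX]

lemma eval_fY (w : Fin 2 → ℂ) :
    eval w fY = -(w 0 ^ 8 + 14 * w 0 ^ 4 * w 1 ^ 4 + w 1 ^ 8) := by simp [fY]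

lemma eval_fZ (w : Fin 2 → ℂ) :
    eval w fZ = w 0 ^ 12 - 33 * w 0 ^ 8 * w 1 ^ 4 - 33 * w 0 ^ 4 * w 1 ^ 8 + w 1 ^ 12
      - 1 / 2 * (w 0 ^ 2 * w 1 ^ 2 * (w 0 ^ 4 - w 1 ^ 4) ^ 2) := by simp [fZ]

lemma fX_ne : fX ≠ 0 := fun h => by
  have := congrArg (eval ![1, 2]) h
  rw [eval_fX] at this
  norm_num at this

lemma two_mul_half : (2 : P2) * MvPolynomial.C (1 / 2 : ℂ) = 1 := by
  rw [← map_ofNat (MvPolynomial.C : ℂ →+* P2) 2, ← map_mul]; norm_num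

/-- The Kleinian relation `z² + z x² + (433/4) x⁴ + y³ = 0`, cleared of denominators. -/
lemma relation : 4 * fZ ^ 2 + 4 * fZ * fX ^ 2 + 433 * fX ^ 4 + 4 * fY ^ 3 = 0 := by
  have h := two_mul_half
  have hz : 2 * fZ + fX ^ 2 = 2 * ((X 0 : P2) ^ 12 - 33 * (X 0 : P2) ^ 8 * (X 1 : P2) ^ 4
        - 33 * (X 0 : P2) ^ 4 * (X 1 : P2) ^ 8 + (X 1 : P2) ^ 12) := by
    unfold fZ fX
    linear_combination (-((X 0 : P2) ^ 2 * (X 1 : P2) ^ 2 *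
      ((X 0 : P2) ^ 4 - (X 1 : P2) ^ 4) ^ 2)) * h
  have h2 : (2 * fZ + fX ^ 2) ^ 2 + 432 * fX ^ 4 + 4 * fY ^ 3 = 0 := by
    rw [hz]; unfold fX fY; ring
  linear_combination h2

/-- This bracket ties the scalar by which a graded (anti-)Poisson automorphism acts on `z` to those for
`x` and `y`. -/
lemma pb_fX_fY : pb fX fY = 8 * fZ + 4 * fX ^ 2 := by
  have h := two_mul_half
  have h14 : (14 : P2) = MvPolynomial.C 14 := (map_ofNat _ _).symm
  have e : pb fX fY = 8 * ((X 0 : P2) ^ 12 - 33 * (X 0 : P2) ^ 8 * (X 1 : P2) ^ 4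
        - 33 * (X 0 : P2) ^ 4 * (X 1 : P2) ^ 8 + (X 1 : P2) ^ 12) := by
    unfold pb fX fY
    rw [h14]
    simp only [map_add, map_neg, map_sub, Derivation.leibniz, Derivation.leibniz_pow, pderiv_C,
      pderiv_X, Pi.single_apply, smul_eq_mul, nsmul_eq_mul]
    rw [← h14]
    simp
    ring
  rw [e]
  unfold fZ fX
  linear_combination (4 * ((X 0 : P2) ^ 2 * (X 1 : P2) ^ 2 *
      ((X 0 : P2) ^ 4 - (X 1 : P2) ^ 4) ^ 2)) * h

/-! ### Divisibility by `x` -/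

lemma homog_support {f : P2} {d : ℕ} (hf : f.IsHomogeneous d) {m : Fin 2 →₀ ℕ}
    (hm : m ∈ f.support) : m 0 + m 1 = d := by
  rw [hf.degree_eq_sum_deg_support hm, ← Fin.sum_univ_two (f := fun i => m i)]
  exact (Finsupp.degree_eq_sum m).symm

lemma eq_single_of_apply_one {m : Fin 2 →₀ ℕ} {d : ℕ} (h : m 0 + m 1 = d) (h1 : m 1 = 0) :
    m = Finsupp.single 0 d := by
  ext i
  fin_cases i
  · simp; omega
  · simpa using h1

/-- A binary form vanishing at `(1, 0)` is divisible by `v`. -/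
lemma X1_dvd {f : P2} {d : ℕ} (hf : f.IsHomogeneous d) (h0 : eval ![1, 0] f = 0) : X 1 ∣ f := by
  have hc : eval ![1, 0] f = coeff (Finsupp.single 0 d) f := by
    rw [eval_eq', Finset.sum_eq_single (Finsupp.single 0 d)]
    · simp [Fin.prod_univ_two]
    · intro m hm hne
      have hm1 : m 1 ≠ 0 := fun h1 => hne (eq_single_of_apply_one (homog_support hf hm) h1)
      simp [Fin.prod_univ_two, hm1]
    · intro h; simp [notMem_support_iff.1 h]
  rw [hc] at h0
  have : f ∈ Ideal.span (X '' ({1} : Set (Fin 2)) : Set P2) := by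
    rw [mem_ideal_span_X_image]
    intro m hm
    refine ⟨1, rfl, fun h1 => ?_⟩
    rw [eq_single_of_apply_one (homog_support hf hm) h1, mem_support_iff] at hm
    exact hm h0
  rwa [Set.image_singleton, Ideal.mem_span_singleton] at this

/-- A factor complementary to `x` in a form of degree `d` is a form of degree `d - 6`; it vanishes when
`d < 6`. -/
lemma quot_homog {g : P2} {d : ℕ} (hg : (fX * g).IsHomogeneous d) :
    g = 0 ∨ (6 ≤ d ∧ g.IsHomogeneous (d - 6)) := by
  let : GradedAlgebra (homogeneousSubmodule (Fin 2) ℂ) := MvPolynomial.gradedAlgebra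
  have hX : fX ∈ homogeneousSubmodule (Fin 2) ℂ 6 := fX_homog
  have hd : ((DirectSum.decompose (homogeneousSubmodule (Fin 2) ℂ) (fX * g) d : _) : P2)
      = fX * g := DirectSum.decompose_of_mem_same _ hg
  by_cases h6 : 6 ≤ d
  · right
    refine ⟨h6, ?_⟩
    rw [DirectSum.coe_decompose_mul_of_left_mem_of_le _ hX h6] at hd
    rw [← mul_left_cancel₀ fX_ne hd]
    exact (DirectSum.decompose (homogeneousSubmodule (Fin 2) ℂ) g (d - 6)).2
  · left
    rw [DirectSum.coe_decompose_mul_of_left_mem_of_not_le _ hX h6] at hd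
    exact (mul_eq_zero.1 hd.symm).resolve_left fX_ne

/-- If `L` divides an invariant `f`, so does its image under the substitution, here `L'` up to a scalar. -/
lemma dvd_act {m : Matrix (Fin 2) (Fin 2) ℂ} {f L L' : P2} (hm : matSub m f = f) (hL : L ∣ f)
    (c : ℂ) (hc : matSub m L = L' * MvPolynomial.C c) : L' ∣ f := by
  have := map_dvd (matSub m) hL
  rw [hm, hc] at this
  exact dvd_of_mul_right_dvd this

/-- Two linear forms with nonzero determinant have no common factor, since both variables are
linear combinations of them. -/
lemma lin_isRelPrime {a b c d : ℂ} (h : a * d - b * c ≠ 0) :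
    IsRelPrime (MvPolynomial.C a * X 0 + MvPolynomial.C b * X 1 : P2)
      (MvPolynomial.C c * X 0 + MvPolynomial.C d * X 1) := by
  have hu : IsUnit (MvPolynomial.C (a * d - b * c) : P2) := (Ne.isUnit h).map MvPolynomial.C
  intro p h1 h2
  have h0 : p ∣ X 0 := by
    rw [← hu.dvd_mul_right, mul_comm]
    have := dvd_sub (h1.mul_left (MvPolynomial.C d)) (h2.mul_left (MvPolynomial.C b))
    convert this using 1
    simp only [map_sub, map_mul]; ring
  have h1 : p ∣ X 1 := by
    rw [← hu.dvd_mul_right, mul_comm]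
    have := dvd_sub (h2.mul_left (MvPolynomial.C a)) (h1.mul_left (MvPolynomial.C c))
    convert this using 1
    simp only [map_sub, map_mul]; ring
  have : IsRelPrime (X 0 : P2) (X 1) :=
    (X_prime.irreducible.isRelPrime_iff_not_dvd).2 (by simp [X_dvd_X])
  exact this h0 h1

lemma C_I_sq : (MvPolynomial.C I : P2) ^ 2 = -1 := by
  rw [← map_pow, I_sq]; simp

lemma prod_lin_eq_fX : (X 1 * (X 0 * ((X 0 - X 1) * ((X 0 + X 1) * ((X 0 - MvPolynomial.C I * X 1) *
    (X 0 + MvPolynomial.C I * X 1))))) : P2) = fX := by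
  unfold fX
  linear_combination (X 1 ^ 3 * X 0 * (X 1 - X 0) * (X 0 + X 1)) * C_I_sq

/-- The six linear factors of `x` form one `Γ`-orbit up to scalars. -/
lemma fX_dvd {Γ : Subgroup SL2} (h : E6Data Γ) {f : P2} (hf : f ∈ invRing Γ) (hv : X 1 ∣ f) :
    fX ∣ f := by
  have hI := C_I_sq
  have h0 : X 0 ∣ f := dvd_act (h.inv2 f hf) hv (-I) (by rw [matSub_X1]; simp [mul_comm])
  have h1 : (X 0 - X 1 : P2) ∣ f := dvd_act (h.inv3 f hf) hv (-((1 + I) / 2)) (by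
    simp only [smul_of, smul_cons, smul_empty, matSub_X1, smul_eq_mul, map_neg, mul_neg, mul_one]
    ring)
  have h2 : (X 0 - MvPolynomial.C I * X 1 : P2) ∣ f :=
    dvd_act (h.inv4 f hf) hv ((1 + I) / 2) (by
      simp only [smul_of, smul_cons, smul_empty, matSub_X1, smul_eq_mul, map_neg, mul_neg,
        mul_one, map_mul]
      ring)
  have h3 : (X 0 + X 1 : P2) ∣ f := dvd_act (h.inv1 f hf) h1 (-I) (by
    simp only [map_sub, matSub_X0, matSub_X1, map_neg, map_zero]
    ring)
  have h4 : (X 0 + MvPolynomial.C I * X 1 : P2) ∣ f := dvd_act (h.inv1 f hf) h2 (-I) (by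
    simp only [map_sub, map_mul, matSub_X0, matSub_X1, map_neg, map_zero, algHom_C,
      algebraMap_eq]
    ring)
  set lin : ℂ → ℂ → P2 := fun a b => MvPolynomial.C a * X 0 + MvPolynomial.C b * X 1 with hlin
  have e0 : (X 0 : P2) = lin 1 0 := by simp [hlin]
  have ev : (X 1 : P2) = lin 0 1 := by simp [hlin]
  have e1 : (X 0 - X 1 : P2) = lin 1 (-1) := by simp [hlin, sub_eq_add_neg]
  have e2 : (X 0 - MvPolynomial.C I * X 1 : P2) = lin 1 (-I) := by simp [hlin, sub_eq_add_neg]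
  have e3 : (X 0 + X 1 : P2) = lin 1 1 := by simp [hlin]
  have e4 : (X 0 + MvPolynomial.C I * X 1 : P2) = lin 1 I := by simp [hlin]
  rw [← prod_lin_eq_fX]
  rw [e1] at h1 ⊢
  rw [e2] at h2 ⊢
  rw [e3] at h3 ⊢
  rw [e4] at h4 ⊢
  rw [ev] at hv ⊢
  rw [e0] at h0 ⊢
  refine IsRelPrime.mul_dvd ?_ hv <| IsRelPrime.mul_dvd ?_ h0 <| IsRelPrime.mul_dvd ?_ h1 <|
    IsRelPrime.mul_dvd ?_ h3 <| IsRelPrime.mul_dvd ?_ h2 h4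
  all_goals
    repeat' apply IsRelPrime.mul_right
    all_goals
      refine lin_isRelPrime ?_
      simp [sub_eq_add_neg] <;>
        exact fun hre => by simpa using congrArg Complex.re hre

/-! ### Generators of the invariant ring -/

/-- For a binary quartic form both sides equal `4 (a₀ + a₄)`: summing over the fourth roots of
unity kills the middle coefficients. -/
lemma quartic_sum {f : P2} (hf : f.IsHomogeneous 4) :
    eval ![1, 1] f + eval ![1, I] f + eval ![1, -1] f + eval ![1, -I] f
      = 4 * (eval ![1, 0] f + eval ![0, 1] f) := by
  simp only [eval_eq', ← Finset.sum_add_distrib, Finset.mul_sum, Fin.prod_univ_two]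
  refine Finset.sum_congr rfl fun m hm => ?_
  have h := homog_support hf hm
  have h0 : m 0 = 4 - m 1 := by omega
  have h1 : m 1 ≤ 4 := by omega
  rw [h0]
  generalize m 1 = k at h1
  interval_cases k <;> simp [pow_succ] <;> ring

lemma eval_smul_homog {f : P2} {d : ℕ} (hf : f.IsHomogeneous d) (t : ℂ) (w : Fin 2 → ℂ) :
    eval (t • w) f = t ^ d * eval w f := by
  simp only [eval_eq', Finset.mul_sum, Fin.prod_univ_two]
  refine Finset.sum_congr rfl fun m hm => ?_
  rw [← homog_support hf hm]
  simp only [Pi.smul_apply, smul_eq_mul, mul_pow, pow_add]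
  ring

/-- An invariant form of degree `d` takes values differing by `t ^ d` at points `w`, `w'` with
`m w = t w'`. -/
lemma eval_inv {m : Matrix (Fin 2) (Fin 2) ℂ} {f : P2} (hm : matSub m f = f) {d : ℕ}
    (hf : f.IsHomogeneous d) {w w' : Fin 2 → ℂ} (t : ℂ) (h : m *ᵥ w = t • w') :
    eval w f = t ^ d * eval w' f := by
  rw [← eval_smul_homog hf, ← h, ← eval_matSub, hm]

/-- There is no nonzero quartic invariant; only its value at `(1, 0)` is needed. -/
lemma quartic_eval {Γ : Subgroup SL2} (h : E6Data Γ) {f : P2} (hf : f ∈ invRing Γ)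
    (hd : f.IsHomogeneous 4) : eval ![1, 0] f = 0 := by
  have a1 := eval_inv (h.inv4 f hf) hd (w := ![1, 0]) (w' := ![1, 1]) ((1 + I) / 2) (by
    ext i; fin_cases i <;> simp)
  have a2 := eval_inv (h.inv3 f hf) hd (w := ![1, 0]) (w' := ![1, -I]) ((1 + I) / 2 * -I) (by
    ext i; fin_cases i <;> simp [mul_assoc])
  have a3 := eval_inv (h.inv4 f hf) hd (w := ![0, 1]) (w' := ![1, -1]) ((1 + I) / 2 * I) (by
    ext i; fin_cases i <;> simp)
  have a4 := eval_inv (h.inv3 f hf) hd (w := ![0, 1]) (w' := ![1, I]) ((1 + I) / 2 * -I) (by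
    ext i; fin_cases i <;> simp [mul_assoc])
  have a5 := eval_inv (h.inv2 f hf) hd (w := ![1, 0]) (w' := ![0, 1]) (-I) (by
    ext i; fin_cases i <;> simp)
  have hI4 : I ^ 4 = 1 := I_pow_four
  have h4 : ((1 + I) / 2) ^ 4 = -1 / 4 := by
    have : (1 + I) ^ 2 = 2 * I := by linear_combination I_sq
    rw [div_pow, show (1 + I) ^ 4 = ((1 + I) ^ 2) ^ 2 by ring, this, mul_pow, I_sq]; norm_num
  have hn : (-I) ^ 4 = 1 := by rw [neg_pow, hI4]; norm_num
  rw [h4] at a1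
  rw [mul_pow, h4, hn] at a2 a4
  rw [mul_pow, h4, hI4] at a3
  rw [hn] at a5
  have q := quartic_sum hd
  linear_combination (4 * a1 + 4 * a2 + 4 * a3 + 4 * a4 - q + 12 * a5) / 24

/-- One step of the division algorithm: a homogeneous invariant of degree `d` is a multiple of a
monomial `y ^ a z ^ b` up to a multiple of `x`. -/
lemma red {Γ : Subgroup SL2} (h : E6Data Γ) {f : P2} (hf : f ∈ invRing Γ) {d : ℕ}
    (hd : f.IsHomogeneous d) : ∃ (c : ℂ) (a b : ℕ) (g : P2),
      f = MvPolynomial.C c * (fY ^ a * fZ ^ b) + fX * g ∧ (c = 0 ∨ 8 * a + 12 * b = d) ∧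
      g ∈ invRing Γ ∧ (g = 0 ∨ (6 ≤ d ∧ g.IsHomogeneous (d - 6))) := by
  obtain ⟨c, a, b, hc, hev⟩ : ∃ (c : ℂ) (a b : ℕ), (c = 0 ∨ 8 * a + 12 * b = d) ∧
      eval ![1, 0] f = c * (-1) ^ a := by
    by_cases h0 : eval ![1, 0] f = 0
    · exact ⟨0, 0, 0, Or.inl rfl, by simp [h0]⟩
    · have e := eval_inv (h.inv1 f hf) hd (w := ![1, 0]) (w' := ![1, 0]) (-I) (by
        ext i; fin_cases i <;> simp)
      have e1 : (-I) ^ d = 1 := mul_right_cancel₀ h0 (by rw [← e, one_mul])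
      -- The generator `diag(i, -i)` fixes the line through `(1, 0)`, so a nonzero value forces `4 ∣ d`.
      have e2 : d % 4 = 0 := by
        rw [← Nat.div_add_mod d 4, pow_add, pow_mul, neg_pow I 4, I_pow_four,
          show (-1 : ℂ) ^ 4 * 1 = 1 by norm_num, one_pow, one_mul] at e1
        have : d % 4 < 4 := Nat.mod_lt _ (by norm_num)
        interval_cases d % 4
        · rfl
        · simpa using congrArg Complex.re e1
        · have := congrArg Complex.re e1
          norm_num at this
        · simpa [pow_succ] using congrArg Complex.re e1
      -- Among multiples of 4, only 4 is not of the form `8a + 12b`.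
      have e3 : d ≠ 4 := by rintro rfl; exact h0 (quartic_eval h hf hd)
      obtain ⟨a, b, hab⟩ : ∃ a b, 8 * a + 12 * b = d := by
        rcases Nat.even_or_odd' (d / 4) with ⟨k, hk | hk⟩
        · exact ⟨k, 0, by omega⟩
        · exact ⟨k - 1, 1, by omega⟩
      exact ⟨eval ![1, 0] f * (-1) ^ a, a, b, Or.inr hab, by
        rw [mul_assoc, ← mul_pow]; simp⟩
  have hmem : f - MvPolynomial.C c * (fY ^ a * fZ ^ b) ∈ invRing Γ :=
    sub_mem hf (mul_mem ((invRing Γ).algebraMap_mem c) (mul_mem (pow_mem h.hy _) (pow_mem h.hz _)))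
  have hhom : (f - MvPolynomial.C c * (fY ^ a * fZ ^ b)).IsHomogeneous d := by
    rcases hc with rfl | rfl
    · simpa using hd
    · exact hd.sub (((fY_homog.pow a).mul (fZ_homog.pow b)).C_mul c)
  obtain ⟨g, hg⟩ := fX_dvd h hmem (X1_dvd hhom (by
    simp only [map_sub, map_mul, map_pow, eval_C, eval_fY, eval_fZ, hev]
    simp))
  refine ⟨c, a, b, g, by rw [← hg]; ring, hc, ?_, quot_homog (hg ▸ hhom)⟩
  rw [mem_invRing]
  intro γ hγ
  have h1 := mem_invRing.1 hmem γ hγ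
  rw [hg, map_mul, mem_invRing.1 h.hx γ hγ] at h1
  exact mul_left_cancel₀ fX_ne h1

/-- The invariant ring is generated by `x, y, z`, by iterating `red` on homogeneous components. -/
lemma mem_adjoin {Γ : Subgroup SL2} (h : E6Data Γ) {f : P2} (hf : f ∈ invRing Γ) :
    f ∈ Algebra.adjoin ℂ ({fX, fY, fZ} : Set P2) := by
  have hX : fX ∈ Algebra.adjoin ℂ ({fX, fY, fZ} : Set P2) := Algebra.subset_adjoin (by simp)
  have hY : fY ∈ Algebra.adjoin ℂ ({fX, fY, fZ} : Set P2) := Algebra.subset_adjoin (by simp)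
  have hZ : fZ ∈ Algebra.adjoin ℂ ({fX, fY, fZ} : Set P2) := Algebra.subset_adjoin (by simp)
  have hom : ∀ d, ∀ f ∈ invRing Γ, f.IsHomogeneous d →
      f ∈ Algebra.adjoin ℂ ({fX, fY, fZ} : Set P2) := by
    intro d
    induction d using Nat.strong_induction_on with
    | _ d ih =>
      intro f hf hd
      obtain ⟨c, a, b, g, rfl, -, hg, hg'⟩ := red h hf hd
      refine add_mem (mul_mem (Subalgebra.algebraMap_mem _ c)
        (mul_mem (pow_mem hY _) (pow_mem hZ _))) (mul_mem hX ?_)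
      rcases hg' with rfl | ⟨h6, hg'⟩
      · exact zero_mem _
      · exact ih (d - 6) (by omega) g hg hg'
  rw [← sum_homogeneousComponent f]
  exact sum_mem fun n _ => hom n _ (component_mem hf n) (homogeneousComponent_isHomogeneous n f)

lemma deg0 {g : P2} (hg : g.IsHomogeneous 0) : ∃ c, g = MvPolynomial.C c :=
  ⟨_, (totalDegree_eq_zero_iff_eq_C).1 ((totalDegree_zero_iff_isHomogeneous _).2 hg)⟩

lemma deg6 {Γ : Subgroup SL2} (h : E6Data Γ) {f : P2} (hf : f ∈ invRing Γ)
    (hd : f.IsHomogeneous 6) : ∃ c, f = MvPolynomial.C c * fX := by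
  obtain ⟨c, a, b, g, rfl, hc, hg, hg'⟩ := red h hf hd
  obtain rfl : c = 0 := hc.resolve_right (by omega)
  rcases hg' with rfl | ⟨-, hg'⟩
  · exact ⟨0, by simp⟩
  · obtain ⟨e, rfl⟩ := deg0 hg'
    exact ⟨e, by simp [mul_comm]⟩

lemma deg2 {Γ : Subgroup SL2} (h : E6Data Γ) {f : P2} (hf : f ∈ invRing Γ)
    (hd : f.IsHomogeneous 2) : f = 0 := by
  obtain ⟨c, a, b, g, rfl, hc, hg, hg'⟩ := red h hf hd
  obtain rfl : c = 0 := hc.resolve_right (by omega)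
  obtain rfl : g = 0 := hg'.resolve_right (by omega)
  simp

lemma deg8 {Γ : Subgroup SL2} (h : E6Data Γ) {f : P2} (hf : f ∈ invRing Γ)
    (hd : f.IsHomogeneous 8) : ∃ c, f = MvPolynomial.C c * fY := by
  obtain ⟨c, a, b, g, rfl, hc, hg, hg'⟩ := red h hf hd
  obtain rfl : g = 0 := hg'.elim id fun h' => deg2 h hg h'.2
  rcases hc with rfl | hc
  · exact ⟨0, by simp⟩
  · obtain rfl : a = 1 := by omega
    obtain rfl : b = 0 := by omega
    exact ⟨c, by simp⟩

lemma deg12 {Γ : Subgroup SL2} (h : E6Data Γ) {f : P2} (hf : f ∈ invRing Γ)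
    (hd : f.IsHomogeneous 12) :
    ∃ c e, f = MvPolynomial.C c * fZ + MvPolynomial.C e * fX ^ 2 := by
  obtain ⟨c, a, b, g, rfl, hc, hg, hg'⟩ := red h hf hd
  obtain ⟨e, rfl⟩ : ∃ e, g = MvPolynomial.C e * fX :=
    hg'.elim (fun h0 => ⟨0, by simp [h0]⟩) fun h' => deg6 h hg h'.2
  rcases hc with rfl | hc
  · exact ⟨0, e, by simp; ring⟩
  · obtain rfl : b = 1 := by omega
    obtain rfl : a = 0 := by omega
    exact ⟨c, e, by ring⟩

/-- Algebra homomorphisms out of the invariant ring are determined by their values on `x, y, z`. -/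
lemma algHom_ext_gens {Γ : Subgroup SL2} (h : E6Data Γ) {A : Type*} [Semiring A] [Algebra ℂ A]
    (φ ψ : invRing Γ →ₐ[ℂ] A) (hx : φ ⟨fX, h.hx⟩ = ψ ⟨fX, h.hx⟩)
    (hy : φ ⟨fY, h.hy⟩ = ψ ⟨fY, h.hy⟩) (hz : φ ⟨fZ, h.hz⟩ = ψ ⟨fZ, h.hz⟩) : φ = ψ := by
  have key : ∀ f ∈ Algebra.adjoin ℂ ({fX, fY, fZ} : Set P2),
      ∃ hf : f ∈ invRing Γ, φ ⟨f, hf⟩ = ψ ⟨f, hf⟩ := by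
    intro f hf
    induction hf using Algebra.adjoin_induction with
    | mem f hf =>
      rcases hf with rfl | rfl | rfl
      exacts [⟨_, hx⟩, ⟨_, hy⟩, ⟨_, hz⟩]
    | algebraMap r =>
      exact ⟨Subalgebra.algebraMap_mem _ r, (φ.commutes r).trans (ψ.commutes r).symm⟩
    | add f g _ _ hf hg =>
      obtain ⟨hf, ef⟩ := hf
      obtain ⟨hg, eg⟩ := hg
      refine ⟨add_mem hf hg, ?_⟩
      have := map_add φ ⟨f, hf⟩ ⟨g, hg⟩
      rw [ef, eg, ← map_add] at this
      exact this
    | mul f g _ _ hf hg =>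
      obtain ⟨hf, ef⟩ := hf
      obtain ⟨hg, eg⟩ := hg
      refine ⟨mul_mem hf hg, ?_⟩
      have := map_mul φ ⟨f, hf⟩ ⟨g, hg⟩
      rw [ef, eg, ← map_mul] at this
      exact this
  ext ⟨f, hf⟩
  exact (key f (mem_adjoin h hf)).2

/-! ### Anti-Poisson involutions -/

/-- The chain rule for a linear substitution. -/
lemma pderiv_matSub (m : Matrix (Fin 2) (Fin 2) ℂ) (i : Fin 2) (f : P2) :
    pderiv i (matSub m f) = ∑ j, MvPolynomial.C (m j i) * matSub m (pderiv j f) := by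
  induction f using MvPolynomial.induction_on with
  | C a => simp [matSub]
  | add p q hp hq =>
    simp only [map_add, hp, hq, mul_add, Finset.sum_add_distrib]
  | mul_X p j hp =>
    have hX : pderiv i (matSub m (X j)) = MvPolynomial.C (m j i) := by
      simp only [matSub, aeval_X, map_sum, Derivation.leibniz, pderiv_X, pderiv_C, smul_eq_mul,
        mul_zero, add_zero, Pi.single_apply, mul_ite, mul_one]
      simp
    rw [map_mul, Derivation.leibniz, hp, hX]
    simp only [Derivation.leibniz, map_add, smul_eq_mul, map_mul, pderiv_X, Fin.sum_univ_two]
    fin_cases j <;> simp <;> ring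

/-- A linear substitution rescales the Poisson bracket by its determinant. -/
lemma pb_matSub (m : Matrix (Fin 2) (Fin 2) ℂ) (f g : P2) :
    pb (matSub m f) (matSub m g) = MvPolynomial.C m.det * matSub m (pb f g) := by
  simp only [pb, pderiv_matSub, Fin.sum_univ_two, Matrix.det_fin_two, map_sub, map_mul]
  ring

/-- The reflections `u ↦ e v`, `v ↦ e' u` with `e e' = 1` and `e⁴ = e'⁴ = s = ±1` induce the
anti-Poisson involutions: they have determinant `-1` and preserve `ℂ[x, y, z]`. -/
lemma exists_antiPoisson {Γ : Subgroup SL2} (h : E6Data Γ) {e e' s : ℂ} (hee : e * e' = 1)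
    (he : e ^ 4 = s) (he' : e' ^ 4 = s) (hs : s ^ 2 = 1) :
    ∃ θ : invRing Γ ≃ₐ[ℂ] invRing Γ, IsAntiPoissonInv Γ θ ∧
      ((θ ⟨fX, h.hx⟩ : invRing Γ) : P2) = -(MvPolynomial.C s * fX) ∧
      ((θ ⟨fY, h.hy⟩ : invRing Γ) : P2) = fY ∧
      ((θ ⟨fZ, h.hz⟩ : invRing Γ) : P2) = MvPolynomial.C s * fZ +
        MvPolynomial.C ((s - 1) / 2) * fX ^ 2 := by
  set m : Matrix (Fin 2) (Fin 2) ℂ := !![0, e; e', 0] with hm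
  have h0 : matSub m (X 0) = MvPolynomial.C e * X 1 := by rw [hm, matSub_X0]; simp
  have h1 : matSub m (X 1) = MvPolynomial.C e' * X 0 := by rw [hm, matSub_X1]; simp
  have E1 : (MvPolynomial.C e * MvPolynomial.C e' : P2) = 1 := by rw [← map_mul, hee, map_one]
  have E2 : (MvPolynomial.C e : P2) ^ 4 = MvPolynomial.C s := by rw [← map_pow, he]
  have E3 : (MvPolynomial.C e' : P2) ^ 4 = MvPolynomial.C s := by rw [← map_pow, he']
  have E4 : (MvPolynomial.C s : P2) ^ 2 = 1 := by rw [← map_pow, hs, map_one]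
  have inv : ∀ f, matSub m (matSub m f) = f := by
    have : (matSub m).comp (matSub m) = AlgHom.id ℂ P2 := by
      apply MvPolynomial.algHom_ext
      intro i
      fin_cases i
      · simp only [Fin.zero_eta, AlgHom.comp_apply, h0, map_mul, h1, algHom_C, algebraMap_eq,
          AlgHom.id_apply]
        linear_combination X 0 * E1
      · simp only [Fin.mk_one, AlgHom.comp_apply, h0, map_mul, h1, algHom_C, algebraMap_eq,
          AlgHom.id_apply]
        linear_combination X 1 * E1
    exact fun f => DFunLike.congr_fun this f
  have p0 : ∀ k, matSub m (X 0 ^ (4 * k)) = MvPolynomial.C s ^ k * X 1 ^ (4 * k) := fun k => by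
    rw [map_pow, h0, mul_pow, pow_mul, E2]
  have p1 : ∀ k, matSub m (X 1 ^ (4 * k)) = MvPolynomial.C s ^ k * X 0 ^ (4 * k) := fun k => by
    rw [map_pow, h1, mul_pow, pow_mul, E3]
  have p4 : matSub m (X 0 ^ 4) = MvPolynomial.C s * X 1 ^ 4 := (p0 1).trans (by ring)
  have p8 : matSub m (X 0 ^ 8) = MvPolynomial.C s ^ 2 * X 1 ^ 8 := p0 2
  have p12 : matSub m (X 0 ^ 12) = MvPolynomial.C s ^ 3 * X 1 ^ 12 := p0 3
  have q4 : matSub m (X 1 ^ 4) = MvPolynomial.C s * X 0 ^ 4 := (p1 1).trans (by ring)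
  have q8 : matSub m (X 1 ^ 8) = MvPolynomial.C s ^ 2 * X 0 ^ 8 := p1 2
  have q12 : matSub m (X 1 ^ 12) = MvPolynomial.C s ^ 3 * X 0 ^ 12 := p1 3
  have p01 : matSub m (X 0 * X 1) = X 0 * X 1 := by
    rw [map_mul, h0, h1]; linear_combination X 0 * X 1 * E1
  have vX : matSub m fX = -(MvPolynomial.C s * fX) := by
    unfold fX
    rw [map_mul, p01, map_sub, p4, q4]
    ring
  have vY : matSub m fY = fY := by
    unfold fY
    simp only [map_neg, map_add, map_mul, map_ofNat, p4, p8, q4, q8]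
    linear_combination (-14 * X 0 ^ 4 * X 1 ^ 4 - X 0 ^ 8 - X 1 ^ 8) * E4
  have vZ : matSub m fZ = MvPolynomial.C s * fZ + MvPolynomial.C ((s - 1) / 2) * fX ^ 2 := by
    have hC : (MvPolynomial.C ((s - 1) / 2) : P2)
        = (MvPolynomial.C s - 1) * MvPolynomial.C (1 / 2) := by
      rw [← map_one (MvPolynomial.C : ℂ →+* P2), ← map_sub, ← map_mul]; congr 1; ring
    have q : (X 0 ^ 2 * X 1 ^ 2 * (X 0 ^ 4 - X 1 ^ 4) ^ 2 : P2) = fX ^ 2 := by unfold fX; ring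
    rw [hC]
    unfold fZ
    rw [q]
    simp only [map_sub, map_add, map_mul, map_ofNat, p4, p8, p12, q4, q8, q12,
      map_pow _ fX, vX, algHom_C,
      algebraMap_eq]
    linear_combination (X 0 ^ 12 + X 1 ^ 12 - 33 * X 0 ^ 8 * X 1 ^ 4 - 33 * X 0 ^ 4 * X 1 ^ 8)
      * MvPolynomial.C s * E4 - MvPolynomial.C (1 / 2) * fX ^ 2 * E4
  have mapsTo : ∀ f ∈ invRing Γ, matSub m f ∈ invRing Γ := by
    intro f hf
    have : Algebra.adjoin ℂ ({fX, fY, fZ} : Set P2) ≤ (invRing Γ).comap (matSub m) := by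
      rw [Algebra.adjoin_le_iff]
      have hC : ∀ c, MvPolynomial.C c ∈ invRing Γ := fun c => (invRing Γ).algebraMap_mem c
      rintro _ (rfl | rfl | rfl)
      · exact (vX ▸ neg_mem (mul_mem (hC s) h.hx) : matSub m fX ∈ invRing Γ)
      · exact (vY.symm ▸ h.hy : matSub m fY ∈ invRing Γ)
      · exact (vZ ▸ add_mem (mul_mem (hC _) h.hz) (mul_mem (hC _) (pow_mem h.hx 2)) :
          matSub m fZ ∈ invRing Γ)
    exact this (mem_adjoin h hf)
  let φ : invRing Γ →ₐ[ℂ] invRing Γ :=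
    ((matSub m).comp (invRing Γ).val).codRestrict (invRing Γ) fun f => mapsTo _ f.2
  have hφ : ∀ f, φ (φ f) = f := fun f => Subtype.ext (inv f)
  have hdet : m.det = -1 := by rw [hm, Matrix.det_fin_two_of, zero_mul, hee, zero_sub]
  refine ⟨AlgEquiv.ofAlgHom φ φ (AlgHom.ext hφ) (AlgHom.ext hφ), ⟨?_, hφ, ?_⟩, vX, vY, vZ⟩
  · exact fun d f hf => matSub_homog m hf
  · intro f g k hk
    change matSub m (k : P2) = - pb (matSub m f) (matSub m g)
    rw [hk, pb_matSub, hdet]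
    simp

/-- The values of an anti-Poisson involution on the generators. If `x, y` are scaled by `a, b` and
`z ↦ c z + e x²`, the bracket `{x, y}` gives `c = -ab` and `2e = c - a²`, and the Kleinian relation
gives `c² = b³ = a⁴`; hence `a = ±1`, `b = 1`, `c = -a`, and `s = -a`. -/
lemma antiPoisson_vals {Γ : Subgroup SL2} (h : E6Data Γ) {θ : invRing Γ ≃ₐ[ℂ] invRing Γ}
    (hθ : IsAntiPoissonInv Γ θ) : ∃ s : ℂ, (s = 1 ∨ s = -1) ∧
      ((θ ⟨fX, h.hx⟩ : invRing Γ) : P2) = -(MvPolynomial.C s * fX) ∧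
      ((θ ⟨fY, h.hy⟩ : invRing Γ) : P2) = fY ∧
      ((θ ⟨fZ, h.hz⟩ : invRing Γ) : P2) = MvPolynomial.C s * fZ +
        MvPolynomial.C ((s - 1) / 2) * fX ^ 2 := by
  obtain ⟨hgr, -, hpb⟩ := hθ
  set x : invRing Γ := ⟨fX, h.hx⟩ with hx
  set y : invRing Γ := ⟨fY, h.hy⟩ with hy
  set z : invRing Γ := ⟨fZ, h.hz⟩ with hz
  obtain ⟨a, ha⟩ := deg6 h (θ x).2 (hgr 6 x fX_homog)
  obtain ⟨b, hb⟩ := deg8 h (θ y).2 (hgr 8 y fY_homog)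
  obtain ⟨c, e, hc⟩ := deg12 h (θ z).2 (hgr 12 z fZ_homog)
  have hinj : ∀ f : invRing Γ, ((θ f : invRing Γ) : P2) = 0 → (f : P2) = 0 := fun f hf => by
    have : θ f = 0 := Subtype.ext hf
    rw [(map_eq_zero_iff θ θ.injective).1 this]; rfl
  have ha0 : a ≠ 0 := by
    rintro rfl
    exact fX_ne (hinj x (by rw [ha]; simp))
  have hb0 : b ≠ 0 := by
    rintro rfl
    have := hinj y (by rw [hb]; simp)
    have := congrArg (eval ![1, 0]) this
    rw [hy, eval_fY] at this
    norm_num at this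
  have r : 4 * z ^ 2 + 4 * z * x ^ 2 + 433 * x ^ 4 + 4 * y ^ 3 = 0 := Subtype.ext relation
  have r' := congrArg (fun t => ((θ t : invRing Γ) : P2)) r
  have p := hpb x y (8 * z + 4 * x ^ 2) pb_fX_fY.symm
  have c4 : ((4 : invRing Γ) : P2) = 4 := rfl
  have c8 : ((8 : invRing Γ) : P2) = 8 := rfl
  have c433 : ((433 : invRing Γ) : P2) = 433 := rfl
  simp only [map_add, map_mul, map_pow, map_ofNat, map_zero, c4, c8, c433, AddMemClass.coe_add,
    MulMemClass.coe_mul, SubmonoidClass.coe_pow, ZeroMemClass.coe_zero, ha, hb, hc] at r' p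
  have hpbC : pb (MvPolynomial.C a * fX) (MvPolynomial.C b * fY)
      = MvPolynomial.C a * MvPolynomial.C b * (8 * fZ + 4 * fX ^ 2) := by
    rw [← pb_fX_fY]
    simp only [pb, pderiv_C_mul]
    ring
  rw [hpbC] at p
  -- At `(1, 0)` one has `(x, y, z) = (0, -1, 1)`, which isolates the coefficients of `z`, `z²`, `y³`;
  -- `(1, 2)` is a point where `x ≠ 0`, which gives the remaining equations.
  have r1 := congrArg (eval ![1, 0]) r'
  have r2 := congrArg (eval ![1, 2]) r'
  have p1 := congrArg (eval ![1, 0]) p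
  have p2 := congrArg (eval ![1, 2]) p
  simp [eval_fX, eval_fY, eval_fZ] at r1 r2 p1 p2
  norm_num at r1 r2 p1 p2
  have hcab : c = -(a * b) := by linear_combination p1 / 8
  have he : e = (c - a ^ 2) / 2 := by linear_combination (p2 + 39032 * hcab) / 7200
  have hba : b = a ^ 2 := mul_left_cancel₀ (pow_ne_zero 2 hb0) (by
    rw [hcab] at r1; linear_combination -r1 / 4)
  rw [he, hcab, hba] at r2
  have ha2 : a ^ 2 = 1 := mul_left_cancel₀ (pow_ne_zero 4 ha0) (by
    linear_combination -r2 / 349920000)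
  have hb1 : b = 1 := hba.trans ha2
  have hca : c = -a := by rw [hcab, hb1, mul_one]
  refine ⟨-a, ?_, ?_, ?_, ?_⟩
  · rcases mul_self_eq_one_iff.1 ((sq a).symm.trans ha2) with h1 | h1 <;> simp [h1]
  · rw [ha, map_neg, neg_mul, neg_neg]
  · rw [hb, hb1, map_one, one_mul]
  · rw [hc, he, ha2, hca]

lemma conj_of_eq_on_gens {Γ : Subgroup SL2} (h : E6Data Γ) {θ θ' : invRing Γ ≃ₐ[ℂ] invRing Γ}
    (hx : θ ⟨fX, h.hx⟩ = θ' ⟨fX, h.hx⟩) (hy : θ ⟨fY, h.hy⟩ = θ' ⟨fY, h.hy⟩)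
    (hz : θ ⟨fZ, h.hz⟩ = θ' ⟨fZ, h.hz⟩) : APIConj Γ θ θ' := by
  refine ⟨AlgEquiv.refl, ⟨fun d f hf => hf, fun f g k hk => hk⟩, fun f => ?_⟩
  exact (DFunLike.congr_fun (algHom_ext_gens h (θ : invRing Γ →ₐ[ℂ] invRing Γ) θ' hx hy hz) f).symm

/-- classification of anti-Poisson involutions in type `E₆`. -/
theorem stmt4 (Γ : Subgroup SL2) (g₁ g₂ g₃ : SL2)
    (hg₁ : (g₁ : Matrix (Fin 2) (Fin 2) ℂ) = !![I, 0; 0, -I])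
    (hg₂ : (g₂ : Matrix (Fin 2) (Fin 2) ℂ) = !![0, I; I, 0])
    (hg₃ : (g₃ : Matrix (Fin 2) (Fin 2) ℂ) = (1 / (1 - I)) • !![1, I; 1, -I])
    (hΓ : Γ = Subgroup.closure {g₁, g₂, g₃})
    (hx : (X 0 : P2) * X 1 * ((X 0 : P2) ^ 4 - (X 1 : P2) ^ 4) ∈ invRing Γ)
    (hy : -((X 0 : P2) ^ 8 + 14 * (X 0 : P2) ^ 4 * (X 1 : P2) ^ 4 + (X 1 : P2) ^ 8)
      ∈ invRing Γ)
    (hz : (X 0 : P2) ^ 12 - 33 * (X 0 : P2) ^ 8 * (X 1 : P2) ^ 4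
        - 33 * (X 0 : P2) ^ 4 * (X 1 : P2) ^ 8 + (X 1 : P2) ^ 12
        - MvPolynomial.C ((1/2) : ℂ) *
            ((X 0 : P2) ^ 2 * (X 1 : P2) ^ 2 * ((X 0 : P2) ^ 4 - (X 1 : P2) ^ 4) ^ 2)
      ∈ invRing Γ) :
    let x : invRing Γ := ⟨(X 0 : P2) * X 1 * ((X 0 : P2) ^ 4 - (X 1 : P2) ^ 4), hx⟩
    let y : invRing Γ :=
      ⟨-((X 0 : P2) ^ 8 + 14 * (X 0 : P2) ^ 4 * (X 1 : P2) ^ 4 + (X 1 : P2) ^ 8), hy⟩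
    let z : invRing Γ := ⟨(X 0 : P2) ^ 12 - 33 * (X 0 : P2) ^ 8 * (X 1 : P2) ^ 4
        - 33 * (X 0 : P2) ^ 4 * (X 1 : P2) ^ 8 + (X 1 : P2) ^ 12
        - MvPolynomial.C ((1/2) : ℂ) *
            ((X 0 : P2) ^ 2 * (X 1 : P2) ^ 2 * ((X 0 : P2) ^ 4 - (X 1 : P2) ^ 4) ^ 2), hz⟩
    -- (i) existence of the two anti-Poisson involutions
    ((∃ θ₁, IsAntiPoissonInv Γ θ₁ ∧ Vals Γ θ₁ x y z (-x) y z) ∧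
     (∃ θ₂, IsAntiPoissonInv Γ θ₂ ∧ Vals Γ θ₂ x y z x y (-z - x ^ 2)) ∧
     -- (ii), (iii)
     ∀ θ₁ θ₂ : invRing Γ ≃ₐ[ℂ] invRing Γ,
       IsAntiPoissonInv Γ θ₁ → Vals Γ θ₁ x y z (-x) y z →
       IsAntiPoissonInv Γ θ₂ → Vals Γ θ₂ x y z x y (-z - x ^ 2) →
         -- (ii) every anti-Poisson involution is conjugate to θ₁ or θ₂
         (∀ θ, IsAntiPoissonInv Γ θ → APIConj Γ θ₁ θ ∨ APIConj Γ θ₂ θ) ∧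
         -- (iii) θ₁ and θ₂ are not conjugate
         ¬ APIConj Γ θ₁ θ₂) := by
  intro x y z
  have h : E6Data Γ := e6Data hg₁ hg₂ hg₃ hΓ hx hy hz
  refine ⟨?_, ?_, fun θ₁ θ₂ h₁ v₁ h₂ v₂ => ⟨fun θ hθ => ?_, ?_⟩⟩
  · obtain ⟨θ, hθ, h1, h2, h3⟩ := exists_antiPoisson h (e := 1) (e' := 1) (s := 1)
      (by norm_num) (by norm_num) (by norm_num) (by norm_num)
    refine ⟨θ, hθ, Subtype.ext (h1.trans ?_), Subtype.ext h2, Subtype.ext (h3.trans ?_)⟩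
    · rw [map_one, one_mul]; rfl
    · simp only [sub_self, zero_div, map_zero, zero_mul, add_zero, map_one, one_mul]; rfl
  · -- A primitive eighth root of unity `e`, with inverse `-I * e`.
    obtain ⟨e, he⟩ := IsAlgClosed.exists_pow_nat_eq I (n := 2) (by norm_num)
    obtain ⟨θ, hθ, h1, h2, h3⟩ := exists_antiPoisson h (e := e) (e' := -I * e) (s := -1)
      (by linear_combination -I * he - I_sq)
      (by linear_combination (e ^ 2 + I) * he + I_sq)
      (by rw [mul_pow, neg_pow, I_pow_four]; linear_combination (e ^ 2 + I) * he + I_sq)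
      (by norm_num)
    refine ⟨θ, hθ, Subtype.ext (h1.trans ?_), Subtype.ext h2, Subtype.ext (h3.trans ?_)⟩
    · rw [map_neg, map_one, neg_one_mul, neg_neg]; rfl
    · rw [show ((-1 : ℂ) - 1) / 2 = -1 by norm_num, map_neg, map_one, neg_one_mul, neg_one_mul,
        ← sub_eq_add_neg]
      rfl
  · obtain ⟨s, hs, h1, h2, h3⟩ := antiPoisson_vals h hθ
    obtain ⟨a1, a2, a3⟩ := v₁
    obtain ⟨b1, b2, b3⟩ := v₂
    rcases hs with rfl | rfl
    · left
      refine conj_of_eq_on_gens h (a1.trans ?_) (a2.trans ?_) (a3.trans ?_)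
      · exact Subtype.ext (Eq.symm (h1.trans (by rw [map_one, one_mul]; rfl)))
      · exact Subtype.ext h2.symm
      · exact Subtype.ext (Eq.symm (h3.trans (by simp; rfl)))
    · right
      refine conj_of_eq_on_gens h (b1.trans ?_) (b2.trans ?_) (b3.trans ?_)
      · exact Subtype.ext (Eq.symm (h1.trans (by rw [map_neg, map_one, neg_one_mul, neg_neg]; rfl)))
      · exact Subtype.ext h2.symm
      · exact Subtype.ext (Eq.symm (h3.trans (by
          rw [show ((-1 : ℂ) - 1) / 2 = -1 by norm_num, map_neg, map_one, neg_one_mul,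
            neg_one_mul, ← sub_eq_add_neg]
          rfl)))
  · -- A graded automorphism scales `x`, which spans the degree 6 part, so it cannot conjugate
    -- an involution negating `x` to one fixing `x`.
    rintro ⟨σ, ⟨hσ, -⟩, hc⟩
    obtain ⟨a, ha⟩ := deg6 h (σ x).2 (hσ 6 x fX_homog)
    have hax : σ x = algebraMap ℂ _ a * x := Subtype.ext ha
    have e1 := hc (σ x)
    rw [σ.symm_apply_apply, v₁.1, map_neg, hax, map_mul, v₂.1, AlgEquiv.commutes] at e1
    have e2 : σ x = 0 := by
      rw [hax]
      have e3 : (2 : ℂ) • (algebraMap ℂ (invRing Γ) a * x) = 0 := by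
        rw [two_smul]; exact eq_neg_iff_add_eq_zero.1 e1
      exact (smul_eq_zero.1 e3).resolve_left two_ne_zero
    exact fX_ne (congrArg Subtype.val ((map_eq_zero_iff σ σ.injective).1 e2))
end
end

section
/- Let n ≥ 1 be odd, Γ = Γ_{A_n}, R = ℂ[u,v]^Γ. (I) For every anti-Poisson involution θ of R with θ(x)=y, θ(y)=x, θ(z)=z: the ideal J_θ equals the ideal of R generated by x−y, the quotient R/J_θ is a reduced ring, and there is a ℂ-algebra isomorphism R/J_θ ≅ ℂ[X,Z]/(X²−Z^{n+1}) sending the class of x to X and the class of z to Z. (II) For every anti-Poisson involution θ of R with θ(x)=x, θ(y)=y, θ(z)=−z: J_θ = (z), R/J_θ is reduced, and R/J_θ ≅ ℂ[X,Y]/(XY) sending the classes of x, y to X, Y. (III) For every anti-Poisson involution θ of R with θ(x)=−x, θ(y)=−y, θ(z)=−z: J_θ = (x,y,z) and R/J_θ ≅ ℂ. -/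
/-! The exponent count `ε ^ a = ε ^ b` for a primitive `(n+1)`-st root of unity `ε` shows that
`R = ℂ[u,v]^Γ` is spanned by the monomials `u ^ a v ^ b` with `a ≡ b mod n + 1`, hence is generated
by `x`, `y`, `z` (`adjoin_eq_top`). Consequently `J_θ` is generated by `θ g - g` for
`g ∈ {x, y, z}` (`Jideal_le`), which gives the generators of `J_θ` in all three cases.

The quotients are identified by evaluating at points. The zero locus of `J_θ` is covered by
curves in the `(u, v)`-plane: the lines `u = v` and `u = ζ v` with `ζ` a primitive `(n+1)`-st root
of unity in case (I), the two axes in case (II), the origin in case (III). Restriction to these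
gives a homomorphism `Ψ` from `R` to a reduced ring of functions that kills `J_θ`. With `φ` the map
from the candidate polynomial ring to `R`, which is surjective modulo `J_θ`, everything follows
once an element of `ker (Ψ ∘ φ)` is shown to lie in the candidate ideal (`quotient_of_kernel`).
For this, polynomials are brought to the normal forms `a(Z) + X b(Z)` modulo `X² - Z^(n+1)`
and `a(X) + Y b(Y)` modulo `X Y`. In case (I), writing `n + 1 = 2 m`, the two lines give
`a(s) + s^m b(s) = 0` and `a(s) - s^m b(s) = 0`, because `ζ ^ m = -1`; this is where the
parity of `n` enters. -/


open MvPolynomial Complex Matrix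

noncomputable section

/-- A diagonal substitution multiplies the coefficient of `u ^ a v ^ b` by `c ^ a * d ^ b`. -/
lemma coeff_matSub_diag (c d : ℂ) (p : P2) (s : Fin 2 →₀ ℕ) :
    coeff s (matSub !![c, 0; 0, d] p) = c ^ s 0 * d ^ s 1 * coeff s p := by
  classical
  induction p using MvPolynomial.induction_on' with
  | monomial t r =>
    have h : matSub !![c, 0; 0, d] (monomial t r) =
        MvPolynomial.C (c ^ t 0 * d ^ t 1) * monomial t r := by
      rw [monomial_eq, Finsupp.prod_fintype _ _ (fun i => pow_zero _)]
      simp only [matSub, map_mul, aeval_X, Fin.sum_univ_two, Fin.prod_univ_two, map_pow,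
        MvPolynomial.algHom_C, MvPolynomial.algebraMap_eq]
      simp
      ring
    rw [h, coeff_C_mul, coeff_monomial]
    split_ifs with hts
    · rw [hts]
    · simp
  | add p q hp hq => rw [map_add, coeff_add, hp, hq, coeff_add]; ring

lemma mem_adjoin_of_monomial_congr {N : ℕ} {S : Subalgebra ℂ P2} (h0 : (X 0 : P2) ^ N ∈ S)
    (h1 : (X 1 : P2) ^ N ∈ S) (h2 : (X 0 * X 1 : P2) ∈ S) {a b : ℕ} (hab : a ≡ b [MOD N]) :
    (X 0 : P2) ^ a * X 1 ^ b ∈ S := by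
  rcases le_total a b with h | h
  · obtain ⟨k, hk⟩ := (Nat.modEq_iff_dvd' h).1 hab
    obtain rfl : b = a + N * k := by omega
    have : (X 0 : P2) ^ a * X 1 ^ (a + N * k) = (X 0 * X 1) ^ a * (X 1 ^ N) ^ k := by ring
    rw [this]
    exact S.mul_mem (S.pow_mem h2 _) (S.pow_mem h1 _)
  · obtain ⟨k, hk⟩ := (Nat.modEq_iff_dvd' h).1 hab.symm
    obtain rfl : a = b + N * k := by omega
    have : (X 0 : P2) ^ (b + N * k) * X 1 ^ b = (X 0 * X 1) ^ b * (X 0 ^ N) ^ k := by ring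
    rw [this]
    exact S.mul_mem (S.pow_mem h2 _) (S.pow_mem h0 _)

/-- The exponents `(a, b)` of a monomial in an invariant satisfy `a ≡ b mod n + 1`. -/
lemma modEq_of_coeff_ne_zero {n : ℕ} {Γ : Subgroup SL2}
    (hΓ : ∀ g : SL2, g ∈ Γ ↔ ∃ ε : ℂ, ε ^ (n + 1) = 1 ∧
      (g : Matrix (Fin 2) (Fin 2) ℂ) = !![ε, 0; 0, ε⁻¹])
    {f : P2} (hf : f ∈ invRing Γ) {s : Fin 2 →₀ ℕ} (hs : coeff s f ≠ 0) :
    s 0 ≡ s 1 [MOD (n + 1)] := by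
  have hprim := Complex.isPrimitiveRoot_exp (n + 1) (Nat.succ_ne_zero n)
  set ε := Complex.exp (2 * Real.pi * Complex.I / ((n + 1 : ℕ) : ℂ)) with hε
  have hε0 : ε ≠ 0 := Complex.exp_ne_zero _
  let g : SL2 := ⟨!![ε, 0; 0, ε⁻¹], by simp [Matrix.det_fin_two, hε0]⟩
  have hg : g⁻¹ ∈ Γ := Γ.inv_mem ((hΓ g).2 ⟨ε, hprim.pow_eq_one, rfl⟩)
  have h1 : slAct g⁻¹ f = f := by
    rw [invRing, Algebra.mem_iInf] at hf
    exact hf ⟨g⁻¹, hg⟩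
  have h2 : slAct g⁻¹ = matSub !![ε, 0; 0, ε⁻¹] := by
    rw [slAct, inv_inv]
  rw [h2] at h1
  have h3 := coeff_matSub_diag ε ε⁻¹ f s
  rw [h1] at h3
  have h4 : ε ^ s 0 * ε⁻¹ ^ s 1 = 1 := by
    have := mul_right_cancel₀ hs ((one_mul _).trans h3)
    exact this.symm
  have h5 : ε ^ ((s 0 : ℤ) - s 1) = 1 := by
    rw [zpow_sub₀ hε0, zpow_natCast, zpow_natCast, div_eq_mul_inv, ← inv_pow, h4]
  exact (Nat.modEq_iff_dvd.2 ((hprim.zpow_eq_one_iff_dvd _).1 h5)).symm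

lemma adjoin_eq_top {n : ℕ} {Γ : Subgroup SL2}
    (hΓ : ∀ g : SL2, g ∈ Γ ↔ ∃ ε : ℂ, ε ^ (n + 1) = 1 ∧
      (g : Matrix (Fin 2) (Fin 2) ℂ) = !![ε, 0; 0, ε⁻¹])
    (x y z : invRing Γ) (hx : (x : P2) = X 0 ^ (n + 1)) (hy : (y : P2) = X 1 ^ (n + 1))
    (hz : (z : P2) = X 0 * X 1) :
    Algebra.adjoin ℂ {x, y, z} = ⊤ := by
  rw [eq_top_iff]
  rintro ⟨f, hf⟩ -
  set S := (Algebra.adjoin ℂ {x, y, z}).map (invRing Γ).val with hS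
  have hmem : ∀ w ∈ ({x, y, z} : Set (invRing Γ)), (w : P2) ∈ S := fun w hw =>
    ⟨w, Algebra.subset_adjoin hw, rfl⟩
  have hfS : f ∈ S := by
    rw [f.as_sum]
    refine S.sum_mem fun s hs => ?_
    rw [monomial_eq, Finsupp.prod_fintype _ _ (fun i => pow_zero _), Fin.prod_univ_two]
    refine S.mul_mem (S.algebraMap_mem _) (mem_adjoin_of_monomial_congr (N := n + 1) ?_ ?_ ?_
      (modEq_of_coeff_ne_zero hΓ hf (mem_support_iff.1 hs)))
    · exact hx ▸ hmem x (by simp)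
    · exact hy ▸ hmem y (by simp)
    · exact hz ▸ hmem z (by simp)
  obtain ⟨g, hg, hgf⟩ := hfS
  have : g = ⟨f, hf⟩ := Subtype.ext hgf
  exact this ▸ hg

lemma Jideal_le {Γ : Subgroup SL2} {s : Set (invRing Γ)} (hs : Algebra.adjoin ℂ s = ⊤)
    (θ : invRing Γ ≃ₐ[ℂ] invRing Γ) (I : Ideal (invRing Γ)) (h : ∀ g ∈ s, θ g - g ∈ I) :
    Jideal Γ θ ≤ I := by
  -- The maps `R → R ⧸ I` induced by `θ` and by the identity agree on the generators.
  have key : (Ideal.Quotient.mkₐ ℂ I).comp (θ : invRing Γ →ₐ[ℂ] invRing Γ) =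
      Ideal.Quotient.mkₐ ℂ I :=
    AlgHom.ext_of_adjoin_eq_top hs fun g hg => Ideal.Quotient.eq.2 (h g hg)
  refine Ideal.span_le.2 ?_
  rintro _ ⟨f, rfl⟩
  exact Ideal.Quotient.eq.1 (DFunLike.congr_fun key f)

lemma sub_mem_Jideal {Γ : Subgroup SL2} (θ : invRing Γ ≃ₐ[ℂ] invRing Γ) (f : invRing Γ) :
    θ f - f ∈ Jideal Γ θ := Ideal.subset_span ⟨f, rfl⟩

/-- If `θ w = -w` then `w ∈ J_θ`, since `2` is invertible. -/
lemma mem_Jideal_of_neg {Γ : Subgroup SL2} {θ : invRing Γ ≃ₐ[ℂ] invRing Γ} {w : invRing Γ}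
    (h : θ w = -w) : w ∈ Jideal Γ θ := by
  have h1 := sub_mem_Jideal θ w
  rw [h] at h1
  have h2 := (Jideal Γ θ).smul_of_tower_mem (-(1 / 2) : ℂ) h1
  have h3 : (-(1 / 2) : ℂ) • (-w - w) = w := by module
  rwa [h3] at h2

/-- The criterion used to compute `R ⧸ J`: `φ` presents `R ⧸ J` by generators of `P` and `Ψ`
detects `J` by values in a reduced ring. -/
lemma quotient_of_kernel {R P S : Type*} [CommRing R] [CommRing P] [CommRing S] [Algebra ℂ R]
    [Algebra ℂ P] [Algebra ℂ S] [IsReduced S] {s : Set R} (hs : Algebra.adjoin ℂ s = ⊤)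
    (J : Ideal R) (I : Ideal P) (φ : P →ₐ[ℂ] R) (Ψ : R →ₐ[ℂ] S)
    (hsurj : ∀ g ∈ s, ∃ p, φ p - g ∈ J) (hI : ∀ p ∈ I, φ p ∈ J) (hJ : ∀ f ∈ J, Ψ f = 0)
    (hker : ∀ p, Ψ (φ p) = 0 → p ∈ I) :
    IsReduced (R ⧸ J) ∧ ∃ e : (R ⧸ J) ≃ₐ[ℂ] (P ⧸ I),
      ∀ p, e (Ideal.Quotient.mk J (φ p)) = Ideal.Quotient.mk I p := by
  set χ : P →ₐ[ℂ] R ⧸ J := (Ideal.Quotient.mkₐ ℂ J).comp φ with hχ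
  have hχs : ∀ f : R, ∃ p, χ p = Ideal.Quotient.mk J f := by
    have h1 : (⊤ : Subalgebra ℂ R) ≤ χ.range.comap (Ideal.Quotient.mkₐ ℂ J) := by
      rw [← hs, Algebra.adjoin_le_iff]
      intro g hg
      obtain ⟨p, hp⟩ := hsurj g hg
      exact ⟨p, Ideal.Quotient.eq.2 hp⟩
    intro f
    exact h1 (Algebra.mem_top (x := f))
  have hχI : ∀ p, χ p = 0 → p ∈ I := fun p hp =>
    hker p (hJ _ (Ideal.Quotient.eq_zero_iff_mem.1 hp))
  have hΨJ : ∀ f, Ψ f = 0 → f ∈ J := by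
    intro f hf
    obtain ⟨p, hp⟩ := hχs f
    have h1 : φ p - f ∈ J := Ideal.Quotient.eq.1 hp
    have h2 : Ψ (φ p) = 0 := by
      have := hJ _ h1
      rwa [map_sub, hf, sub_zero] at this
    have := J.sub_mem (hI p (hker p h2)) h1
    rwa [sub_sub_cancel] at this
  refine ⟨?_, ?_⟩
  · have hinj : Function.Injective (Ideal.Quotient.liftₐ J Ψ hJ) := by
      rw [injective_iff_map_eq_zero]
      intro q hq
      obtain ⟨f, rfl⟩ := Ideal.Quotient.mk_surjective q
      exact Ideal.Quotient.eq_zero_iff_mem.2 (hΨJ f hq)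
    exact isReduced_of_injective (Ideal.Quotient.liftₐ J Ψ hJ) hinj
  · let e' : (P ⧸ I) →ₐ[ℂ] (R ⧸ J) := Ideal.Quotient.liftₐ I χ
      fun p hp => Ideal.Quotient.eq_zero_iff_mem.2 (hI p hp)
    have hbij : Function.Bijective e' := by
      constructor
      · rw [injective_iff_map_eq_zero]
        intro q hq
        obtain ⟨p, rfl⟩ := Ideal.Quotient.mk_surjective q
        exact Ideal.Quotient.eq_zero_iff_mem.2 (hχI p hq)
      · intro q
        obtain ⟨f, rfl⟩ := Ideal.Quotient.mk_surjective q
        obtain ⟨p, hp⟩ := hχs f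
        exact ⟨Ideal.Quotient.mk I p, hp⟩
    refine ⟨(AlgEquiv.ofBijective e' hbij).symm, fun p => ?_⟩
    rw [AlgEquiv.symm_apply_eq]
    rfl

/-- Restriction of invariant polynomials to the two parametrized curves `c` and `d`. -/
def curveEval (Γ : Subgroup SL2) (c d : ℂ → Fin 2 → ℂ) : invRing Γ →ₐ[ℂ] (ℂ → ℂ × ℂ) :=
  AlgHom.pi fun t => ((aeval (c t)).comp (invRing Γ).val).prod
    ((aeval (d t)).comp (invRing Γ).val)

lemma curveEval_apply (Γ : Subgroup SL2) (c d : ℂ → Fin 2 → ℂ) (f : invRing Γ) (t : ℂ) :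
    curveEval Γ c d f t = (aeval (c t) (f : P2), aeval (d t) (f : P2)) := rfl

lemma normalForm_cusp (N : ℕ) (p : P2) : ∃ a b : Polynomial ℂ,
    p - (Polynomial.aeval (X 1 : P2) a + X 0 * Polynomial.aeval (X 1 : P2) b) ∈
      Ideal.span {(X 0 : P2) ^ 2 - X 1 ^ N} := by
  simp only [Ideal.mem_span_singleton']
  induction p using MvPolynomial.induction_on with
  | C r => exact ⟨Polynomial.C r, 0, 0, by simp [MvPolynomial.algebraMap_eq]⟩
  | add p q hp hq =>
    obtain ⟨a, b, k, h⟩ := hp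
    obtain ⟨a', b', k', h'⟩ := hq
    refine ⟨a + a', b + b', k + k', ?_⟩
    simp only [map_add]
    linear_combination h + h'
  | mul_X p i hp =>
    obtain ⟨a, b, k, h⟩ := hp
    fin_cases i
    · refine ⟨Polynomial.X ^ N * b, a, X 0 * k + Polynomial.aeval (X 1 : P2) b, ?_⟩
      simp only [map_mul, map_pow, Polynomial.aeval_X, Fin.zero_eta]
      linear_combination X 0 * h
    · refine ⟨Polynomial.X * a, Polynomial.X * b, X 1 * k, ?_⟩
      simp only [map_mul, Polynomial.aeval_X, Fin.mk_one]
      linear_combination X 1 * h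

lemma normalForm_node (p : P2) : ∃ a b : Polynomial ℂ,
    p - (Polynomial.aeval (X 0 : P2) a + X 1 * Polynomial.aeval (X 1 : P2) b) ∈
      Ideal.span {(X 0 * X 1 : P2)} := by
  simp only [Ideal.mem_span_singleton']
  induction p using MvPolynomial.induction_on with
  | C r => exact ⟨Polynomial.C r, 0, 0, by simp [MvPolynomial.algebraMap_eq]⟩
  | add p q hp hq =>
    obtain ⟨a, b, k, h⟩ := hp
    obtain ⟨a', b', k', h'⟩ := hq
    refine ⟨a + a', b + b', k + k', ?_⟩
    simp only [map_add]
    linear_combination h + h'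
  | mul_X p i hp =>
    obtain ⟨a, b, k, h⟩ := hp
    fin_cases i
    · refine ⟨Polynomial.X * a, 0, X 0 * k + Polynomial.aeval (X 1 : P2) b, ?_⟩
      simp only [map_mul, Polynomial.aeval_X, Fin.zero_eta, map_zero]
      linear_combination X 0 * h
    · -- `Y a(X) ≡ Y a(0)` modulo `X Y`
      have ha : Polynomial.aeval (X 0 : P2) a =
          X 0 * Polynomial.aeval (X 0 : P2) a.divX + MvPolynomial.C (a.coeff 0) := by
        have := congrArg (Polynomial.aeval (X 0 : P2)) (Polynomial.X_mul_divX_add a)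
        rw [map_add, map_mul, Polynomial.aeval_X, Polynomial.aeval_C] at this
        exact this.symm
      refine ⟨0, Polynomial.C (a.coeff 0) + Polynomial.X * b,
        X 1 * k + Polynomial.aeval (X 0 : P2) a.divX, ?_⟩
      simp only [map_mul, map_add, Polynomial.aeval_X, Polynomial.aeval_C, Fin.mk_one, map_zero,
        MvPolynomial.algebraMap_eq]
      linear_combination X 1 * h - X 1 * ha

lemma aeval_polynomial_aeval_X (c : Fin 2 → ℂ) (i : Fin 2) (a : Polynomial ℂ) :
    aeval c (Polynomial.aeval (X i : P2) a) = a.eval (c i) := by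
  rw [← Polynomial.aeval_algHom_apply, aeval_X, Polynomial.coe_aeval_eq_eval]

/-- A polynomial vanishing on both branches `X = ± Z ^ m` is divisible by `X² - Z ^ (2 m)`. -/
lemma mem_span_cusp (m : ℕ) (p : P2) (h1 : ∀ s : ℂ, aeval ![s ^ m, s] p = (0 : ℂ))
    (h2 : ∀ s : ℂ, aeval ![-s ^ m, s] p = (0 : ℂ)) :
    p ∈ Ideal.span {(X 0 : P2) ^ 2 - X 1 ^ (2 * m)} := by
  obtain ⟨a, b, hab⟩ := normalForm_cusp (2 * m) p
  obtain ⟨k, hk⟩ := Ideal.mem_span_singleton'.1 hab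
  have e1 : ∀ s : ℂ, a.eval s + s ^ m * b.eval s = 0 := by
    intro s
    have := congrArg (aeval ![s ^ m, s]) hk
    simp only [map_mul, map_sub, map_add, map_pow, aeval_X, aeval_polynomial_aeval_X, h1] at this
    simp only [cons_val_zero, cons_val_one] at this
    linear_combination this - aeval ![s ^ m, s] k * (by ring : (s ^ m) ^ 2 - s ^ (2 * m) = 0)
  have e2 : ∀ s : ℂ, a.eval s - s ^ m * b.eval s = 0 := by
    intro s
    have := congrArg (aeval ![-s ^ m, s]) hk
    simp only [map_mul, map_sub, map_add, map_pow, aeval_X, aeval_polynomial_aeval_X, h2] at this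
    simp only [cons_val_zero, cons_val_one] at this
    linear_combination this - aeval ![-s ^ m, s] k * (by ring : (-s ^ m) ^ 2 - s ^ (2 * m) = 0)
  have ha : a = 0 := Polynomial.funext fun s => by
    rw [Polynomial.eval_zero]; linear_combination (e1 s + e2 s) / 2
  have hb : Polynomial.X ^ m * b = 0 := Polynomial.funext fun s => by
    rw [Polynomial.eval_zero, Polynomial.eval_mul, Polynomial.eval_pow, Polynomial.eval_X]
    linear_combination (e1 s - e2 s) / 2
  have hb' : b = 0 := (mul_eq_zero.1 hb).resolve_left (pow_ne_zero _ Polynomial.X_ne_zero)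
  simpa [ha, hb'] using hab

/-- A polynomial vanishing on both coordinate axes is divisible by `X Y`. -/
lemma mem_span_node (p : P2) (h1 : ∀ s : ℂ, aeval ![s, 0] p = (0 : ℂ))
    (h2 : ∀ s : ℂ, aeval ![0, s] p = (0 : ℂ)) :
    p ∈ Ideal.span {(X 0 * X 1 : P2)} := by
  obtain ⟨a, b, hab⟩ := normalForm_node p
  obtain ⟨k, hk⟩ := Ideal.mem_span_singleton'.1 hab
  have ha : a = 0 := Polynomial.funext fun s => by
    have := congrArg (aeval ![s, 0]) hk
    simp only [map_mul, map_sub, map_add, aeval_X, aeval_polynomial_aeval_X, h1] at this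
    simp only [cons_val_zero, cons_val_one] at this
    rw [Polynomial.eval_zero]
    linear_combination this
  have hb : Polynomial.X * b = 0 := Polynomial.funext fun s => by
    have := congrArg (aeval ![0, s]) hk
    simp only [map_mul, map_sub, map_add, aeval_X, aeval_polynomial_aeval_X, h2] at this
    simp only [cons_val_zero, cons_val_one, ha, Polynomial.eval_zero] at this
    rw [Polynomial.eval_zero, Polynomial.eval_mul, Polynomial.eval_X]
    linear_combination this
  have hb' : b = 0 := (mul_eq_zero.1 hb).resolve_left Polynomial.X_ne_zero
  simpa [ha, hb'] using hab

/-- Evaluating `p(f, g)` at a point. -/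
lemma aeval_coe_aeval {Γ : Subgroup SL2} (f g : invRing Γ) (c : Fin 2 → ℂ) (p : P2) :
    aeval c ((aeval ![f, g] p : invRing Γ) : P2) =
      aeval ![aeval c (f : P2), aeval c (g : P2)] p := by
  have : ((aeval c).comp (invRing Γ).val).comp (aeval ![f, g]) =
      (aeval ![aeval c (f : P2), aeval c (g : P2)] : P2 →ₐ[ℂ] ℂ) := by
    ext i
    fin_cases i <;> simp
  exact DFunLike.congr_fun this p

/-- fixed point loci of the anti-Poisson involutions in type `Aₙ`, `n` odd. -/
theorem stmt7 (n : ℕ) (hn : 1 ≤ n) (hodd : Odd n) (Γ : Subgroup SL2)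
    (hΓ : ∀ g : SL2, g ∈ Γ ↔ ∃ ε : ℂ, ε ^ (n + 1) = 1 ∧
      (g : Matrix (Fin 2) (Fin 2) ℂ) = !![ε, 0; 0, ε⁻¹])
    (hx : (X 0 : P2) ^ (n + 1) ∈ invRing Γ)
    (hy : (X 1 : P2) ^ (n + 1) ∈ invRing Γ)
    (hz : (X 0 * X 1 : P2) ∈ invRing Γ) :
    let x : invRing Γ := ⟨(X 0 : P2) ^ (n + 1), hx⟩
    let y : invRing Γ := ⟨(X 1 : P2) ^ (n + 1), hy⟩
    let z : invRing Γ := ⟨(X 0 * X 1 : P2), hz⟩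
    -- (I) θ(x) = y, θ(y) = x, θ(z) = z
    (∀ θ : invRing Γ ≃ₐ[ℂ] invRing Γ, IsAntiPoissonInv Γ θ → Vals Γ θ x y z y x z →
      Jideal Γ θ = Ideal.span {x - y} ∧
      IsReduced ((invRing Γ) ⧸ Jideal Γ θ) ∧
      ∃ e : ((invRing Γ) ⧸ Jideal Γ θ) ≃ₐ[ℂ]
          (P2 ⧸ Ideal.span {(X 0 : P2) ^ 2 - (X 1 : P2) ^ (n + 1)}),
        e (Ideal.Quotient.mk (Jideal Γ θ) x) =
          Ideal.Quotient.mk (Ideal.span {(X 0 : P2) ^ 2 - (X 1 : P2) ^ (n + 1)}) (X 0) ∧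
        e (Ideal.Quotient.mk (Jideal Γ θ) z) =
          Ideal.Quotient.mk (Ideal.span {(X 0 : P2) ^ 2 - (X 1 : P2) ^ (n + 1)}) (X 1)) ∧
    -- (II) θ(x) = x, θ(y) = y, θ(z) = -z
    (∀ θ : invRing Γ ≃ₐ[ℂ] invRing Γ, IsAntiPoissonInv Γ θ → Vals Γ θ x y z x y (-z) →
      Jideal Γ θ = Ideal.span {z} ∧
      IsReduced ((invRing Γ) ⧸ Jideal Γ θ) ∧
      ∃ e : ((invRing Γ) ⧸ Jideal Γ θ) ≃ₐ[ℂ] (P2 ⧸ Ideal.span {(X 0 * X 1 : P2)}),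
        e (Ideal.Quotient.mk (Jideal Γ θ) x) =
          Ideal.Quotient.mk (Ideal.span {(X 0 * X 1 : P2)}) (X 0) ∧
        e (Ideal.Quotient.mk (Jideal Γ θ) y) =
          Ideal.Quotient.mk (Ideal.span {(X 0 * X 1 : P2)}) (X 1)) ∧
    -- (III) θ(x) = -x, θ(y) = -y, θ(z) = -z
    (∀ θ : invRing Γ ≃ₐ[ℂ] invRing Γ, IsAntiPoissonInv Γ θ →
        Vals Γ θ x y z (-x) (-y) (-z) →
      Jideal Γ θ = Ideal.span {x, y, z} ∧
      Nonempty (((invRing Γ) ⧸ Jideal Γ θ) ≃ₐ[ℂ] ℂ)) := by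
  intro x y z
  have hgen : Algebra.adjoin ℂ {x, y, z} = ⊤ := adjoin_eq_top hΓ x y z rfl rfl rfl
  refine ⟨?_, ?_, ?_⟩
  · rintro θ - ⟨hθx, hθy, hθz⟩
    have hJ : Jideal Γ θ = Ideal.span {x - y} := by
      refine le_antisymm (Jideal_le hgen θ _ ?_) ?_
      · rintro g (rfl | rfl | rfl)
        · rw [hθx, ← neg_sub x y]
          exact (Ideal.span {x - y}).neg_mem (Ideal.mem_span_singleton_self _)
        · rw [hθy]
          exact Ideal.mem_span_singleton_self _
        · rw [hθz, sub_self]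
          exact zero_mem _
      · rw [Ideal.span_singleton_le_iff_mem]
        have := sub_mem_Jideal θ y
        rwa [hθy] at this
    refine ⟨hJ, ?_⟩
    obtain ⟨m, hm⟩ : ∃ m, n + 1 = 2 * m := (Odd.add_one hodd).two_dvd
    have hprim := Complex.isPrimitiveRoot_exp (n + 1) (Nat.succ_ne_zero n)
    obtain ⟨ζ, hζ⟩ : ∃ ζ : ℂ, IsPrimitiveRoot ζ (n + 1) := ⟨_, hprim⟩
    have hζm : ζ ^ m = -1 := by
      have h2 : IsPrimitiveRoot (ζ ^ m) 2 := hζ.pow (by omega) (by rw [hm, mul_comm])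
      exact h2.eq_neg_one_of_two_right
    have hζ0 : ζ ≠ 0 := hζ.ne_zero (Nat.succ_ne_zero n)
    have hxy : x - y ∈ Jideal Γ θ := hJ ▸ Ideal.mem_span_singleton_self _
    have hQ := quotient_of_kernel hgen (Jideal Γ θ)
      (Ideal.span {(X 0 : P2) ^ 2 - (X 1 : P2) ^ (n + 1)}) (aeval ![x, z])
      (curveEval Γ (fun t => ![t, t]) (fun t => ![ζ * t, t])) ?_ ?_ ?_ ?_
    · obtain ⟨hred, e, he⟩ := hQ
      refine ⟨hred, e, ?_, ?_⟩
      · simpa using he (X 0)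
      · simpa using he (X 1)
    · rintro g (rfl | rfl | rfl)
      · exact ⟨X 0, by simp⟩
      · exact ⟨X 0, by simpa using hxy⟩
      · exact ⟨X 1, by simp⟩
    · intro p hp
      obtain ⟨k, rfl⟩ := Ideal.mem_span_singleton'.1 hp
      have hrel : z ^ (n + 1) = x * y := Subtype.ext (by simp [x, y, z, mul_pow])
      have : aeval ![x, z] (k * ((X 0 : P2) ^ 2 - (X 1 : P2) ^ (n + 1))) =
          aeval ![x, z] k * x * (x - y) := by
        simp only [map_mul, map_sub, map_pow, aeval_X, cons_val_zero, cons_val_one, hrel]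
        ring
      rw [this]
      exact Ideal.mul_mem_left _ _ hxy
    · intro f hf
      rw [hJ] at hf
      obtain ⟨k, rfl⟩ := Ideal.mem_span_singleton'.1 hf
      funext t
      simp [curveEval_apply, x, y, mul_pow, hζ.pow_eq_one]
    · intro p hp
      have hpt := fun t => congrFun hp t
      simp only [curveEval_apply, aeval_coe_aeval, Pi.zero_apply, Prod.ext_iff, Prod.fst_zero,
        Prod.snd_zero, x, z, map_pow, map_mul, aeval_X, cons_val_zero, cons_val_one] at hpt
      rw [hm]
      refine mem_span_cusp m p (fun s => ?_) (fun s => ?_)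
      · obtain ⟨t, rfl⟩ := IsAlgClosed.exists_pow_nat_eq s (n := 2) (by norm_num)
        rw [← (hpt t).1, hm, pow_mul, sq]
      · -- the point `s = ζ t²` has `x`-coordinate `t ^ (2 m) = (s / ζ) ^ m = -s ^ m`
        obtain ⟨t, ht⟩ := IsAlgClosed.exists_pow_nat_eq (s / ζ) (n := 2) (by norm_num)
        have hs : s = ζ * t * t := by
          rw [mul_assoc, ← sq, ht]
          field_simp
        rw [← (hpt t).2]
        congr 3
        rw [mul_pow, hζ.pow_eq_one, hm, hs, mul_pow, mul_pow, hζm]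
        ring_nf
        rw [hs]
  · rintro θ - ⟨hθx, hθy, hθz⟩
    have hzJ : z ∈ Jideal Γ θ := mem_Jideal_of_neg hθz
    have hJ : Jideal Γ θ = Ideal.span {z} := by
      refine le_antisymm (Jideal_le hgen θ _ ?_) ?_
      · rintro g (rfl | rfl | rfl)
        · rw [hθx, sub_self]
          exact zero_mem _
        · rw [hθy, sub_self]
          exact zero_mem _
        · rw [hθz]
          exact sub_mem (neg_mem (Ideal.mem_span_singleton_self _))
            (Ideal.mem_span_singleton_self _)
      · rwa [Ideal.span_singleton_le_iff_mem]
    refine ⟨hJ, ?_⟩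
    have hQ := quotient_of_kernel hgen (Jideal Γ θ)
      (Ideal.span {(X 0 * X 1 : P2)}) (aeval ![x, y])
      (curveEval Γ (fun t => ![t, 0]) (fun t => ![0, t])) ?_ ?_ ?_ ?_
    · obtain ⟨hred, e, he⟩ := hQ
      refine ⟨hred, e, ?_, ?_⟩
      · simpa using he (X 0)
      · simpa using he (X 1)
    · rintro g (rfl | rfl | rfl)
      · exact ⟨X 0, by simp⟩
      · exact ⟨X 1, by simp⟩
      · exact ⟨0, by simpa using hzJ⟩
    · intro p hp
      obtain ⟨k, rfl⟩ := Ideal.mem_span_singleton'.1 hp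
      have hrel : x * y = z ^ (n + 1) := Subtype.ext (by simp [x, y, z, mul_pow])
      simp only [map_mul, aeval_X, cons_val_zero, cons_val_one, hrel, pow_succ]
      exact Ideal.mul_mem_left _ _ (Ideal.mul_mem_left _ _ hzJ)
    · intro f hf
      rw [hJ] at hf
      obtain ⟨k, rfl⟩ := Ideal.mem_span_singleton'.1 hf
      funext t
      simp [curveEval_apply, z]
    · intro p hp
      have hpt := fun t => congrFun hp t
      simp only [curveEval_apply, aeval_coe_aeval, Pi.zero_apply, Prod.ext_iff, Prod.fst_zero,
        Prod.snd_zero, x, y, map_pow, aeval_X, cons_val_zero, cons_val_one,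
        zero_pow (Nat.succ_ne_zero n)] at hpt
      refine mem_span_node p (fun s => ?_) (fun s => ?_)
      · obtain ⟨t, rfl⟩ := IsAlgClosed.exists_pow_nat_eq s (Nat.succ_pos n)
        exact (hpt t).1
      · obtain ⟨t, rfl⟩ := IsAlgClosed.exists_pow_nat_eq s (Nat.succ_pos n)
        exact (hpt t).2
  · rintro θ - ⟨hθx, hθy, hθz⟩
    have hmem : ∀ g ∈ ({x, y, z} : Set (invRing Γ)), θ g = -g := by
      rintro g (rfl | rfl | rfl) <;> assumption
    have hJ : Jideal Γ θ = Ideal.span {x, y, z} := by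
      refine le_antisymm (Jideal_le hgen θ _ fun g hg => ?_) ?_
      · rw [hmem g hg]
        exact sub_mem (neg_mem (Ideal.subset_span hg)) (Ideal.subset_span hg)
      · exact Ideal.span_le.2 fun g hg => mem_Jideal_of_neg (hmem g hg)
    refine ⟨hJ, ?_⟩
    have hQ := quotient_of_kernel hgen (Jideal Γ θ) (⊥ : Ideal ℂ)
      (Algebra.ofId ℂ (invRing Γ))
      ((aeval (0 : Fin 2 → ℂ)).comp (invRing Γ).val) ?_ ?_ ?_ ?_
    · obtain ⟨-, e, -⟩ := hQ
      exact ⟨e.trans (AlgEquiv.quotientBot ℂ ℂ)⟩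
    · exact fun g hg => ⟨0, by simpa using mem_Jideal_of_neg (hmem g hg)⟩
    · intro p hp
      rw [Ideal.mem_bot.1 hp, map_zero]
      exact zero_mem _
    · rw [hJ]
      refine fun f hf => (Ideal.span_le (I := RingHom.ker
        ((aeval (0 : Fin 2 → ℂ)).comp (invRing Γ).val))).2 ?_ hf
      rintro g (rfl | rfl | rfl) <;> simp [RingHom.mem_ker, x, y, z]
    · intro p hp
      rw [Algebra.ofId_apply, AlgHom.commutes] at hp
      simpa using hp
end
end

section
/- Let n ≥ 4 be even, Γ = Γ_{D_n}, R = ℂ[u,v]^Γ. (I) For every anti-Poisson involution θ of R with θ(x)=x, θ(y)=y, θ(z)=−z: the ideal J_θ equals (z), the quotient R/J_θ is a reduced ring, and there is a ℂ-algebra isomorphism R/J_θ ≅ ℂ[X,Y]/(XY(Y−X^{(n−2)/2})) sending the classes of x, y to X, Y. (II) For every anti-Poisson involution θ of R with θ(x)=x, θ(y)=x^{(n−2)/2}−y, θ(z)=z: J_θ = (2y−x^{(n−2)/2}), R/J_θ is reduced, and R/J_θ ≅ ℂ[X,Z]/(X^{n−1}+4Z²) sending the classes of x, z to X, Z. -/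
/-!
Write `n = 2k + 2`, so that `k = (n - 2) / 2`. The proof rests on the structure of the invariant
ring: `R = ℂ[x, y] ⊕ z ℂ[x, y]`, with `x, y` algebraically independent and
`z ^ 2 = x y (y - x ^ k)`.

* Spanning (`dec_of_mem`): invariance under the cyclic subgroup leaves only monomials `u ^ a v ^ b`
  with `a ≡ b` modulo `4k`; symmetrising them under `u ↦ -v, v ↦ u` gives powers of `uv` times
  `U ^ j ± V ^ j`, where `U = u ^ (4k)`, `V = v ^ (4k)`, and these obey a two-term recursion with
  coefficients `U + V = -4y + 2x ^ k` and `U V = x ^ (2k)`.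
* Uniqueness (`phi_uniq`): the swap `u ↔ v` fixes `x, y` and negates `z`, which separates the two
  summands; `x, y` are algebraically independent because `(u, v) ↦ (x, y)` is onto `ℂ²`
  (`phi_inj`).

Given this structure, both parts are formal. In (I), `θ f - f` is `-2` times the `z`-part of `f`, so
`J_θ = (z)`, and the kernel of `ℂ[X, Y] → R / (z)` is generated by the value of `z ^ 2` (`partI`);
that polynomial is squarefree (`radical_D`). In (II), `θ` is the identity modulo
`w = 2y - x ^ k`, and modulo `w` the relation becomes `x ^ (2k + 1) + 4 z ^ 2 = 0` (`partII`).
Every polynomial is `a(X) + Z b(X)` modulo `E = X ^ (2k + 1) + 4 Z ^ 2` (`normal_form`), and such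
an expression vanishes in `R / (w)` only if `a = b = 0`. The parametrisation
`(-t ^ 2, t ^ (2k + 1) / 2)` of the curve `E = 0` embeds `ℂ[X, Z] / (E)` in `ℂ[t]`, whence
reducedness (`prime_E`).
-/

open MvPolynomial Complex Matrix

noncomputable section

/-! ### The quotients `R / J_θ` for an abstract `R = ℂ[x, y] ⊕ z ℂ[x, y]` -/

lemma quot_equiv {R : Type*} [CommRing R] [Algebra ℂ R] (J : Ideal R) (D : P2)
    (ψ : P2 →ₐ[ℂ] (R ⧸ J)) (hs : Function.Surjective ψ)
    (hk : ∀ P, ψ P = 0 ↔ D ∣ P) :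
    ∃ e : (R ⧸ J) ≃ₐ[ℂ] (P2 ⧸ Ideal.span {D}), ∀ A, e (ψ A) = Ideal.Quotient.mk _ A := by
  have h : Ideal.span {D} = RingHom.ker ψ := by
    ext P
    rw [Ideal.mem_span_singleton, RingHom.mem_ker, hk]
  refine ⟨((Ideal.quotientEquivAlgOfEq ℂ h).trans
    (Ideal.quotientKerAlgEquivOfSurjective hs)).symm, fun A => ?_⟩
  rw [AlgEquiv.symm_apply_eq]
  simp [AlgEquiv.trans_apply]

/-- Part (I) for any algebra `R = φ(ℂ[X, Y]) ⊕ z φ(ℂ[X, Y])` with `z ^ 2 = φ D`. The kernel of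
`ℂ[X, Y] → R / (z)` is `(D)` because `z (φ A + z φ B) = φ (D B) + z φ A`. -/
lemma partI {R : Type*} [CommRing R] [Algebra ℂ R] (φ : P2 →ₐ[ℂ] R) (z : R) (D : P2)
    (hz : z ^ 2 = φ D) (hex : ∀ f, ∃ A B, f = φ A + z * φ B)
    (huniq : ∀ A B, φ A + z * φ B = 0 → A = 0 ∧ B = 0)
    (θ : R ≃ₐ[ℂ] R) (hθφ : ∀ A, θ (φ A) = φ A) (hθz : θ z = -z) :
    Ideal.span (Set.range fun f => θ f - f) = Ideal.span {z} ∧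
    ∃ e : (R ⧸ Ideal.span (Set.range fun f => θ f - f)) ≃ₐ[ℂ] (P2 ⧸ Ideal.span {D}),
      ∀ A, e (Ideal.Quotient.mk _ (φ A)) = Ideal.Quotient.mk _ A := by
  have hJ : Ideal.span (Set.range fun f => θ f - f) = Ideal.span {z} := by
    apply le_antisymm
    · rw [Ideal.span_le]
      rintro _ ⟨f, rfl⟩
      obtain ⟨A, B, rfl⟩ := hex f
      rw [SetLike.mem_coe, Ideal.mem_span_singleton]
      refine ⟨-2 * φ B, ?_⟩
      simp only [map_add, map_mul, hθφ, hθz]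
      ring
    · rw [Ideal.span_singleton_le_iff_mem]
      refine Ideal.subset_span ⟨φ (C (-1/2)) * z, ?_⟩
      simp only [map_mul, hθφ, hθz]
      have h2 : (-2 : R) = φ (C (-2)) := by rw [C_neg, map_neg, map_ofNat C 2, map_ofNat]
      have : (-2 : R) * φ (C (-1/2)) = 1 := by
        rw [h2, ← map_mul, ← C_mul]; norm_num
      linear_combination z * this
  refine ⟨hJ, ?_⟩
  refine quot_equiv _ D ((Ideal.Quotient.mkₐ ℂ _).comp φ) ?_ ?_
  · intro q
    obtain ⟨f, rfl⟩ := Ideal.Quotient.mk_surjective q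
    obtain ⟨A, B, rfl⟩ := hex f
    refine ⟨A, ?_⟩
    simp only [AlgHom.comp_apply, Ideal.Quotient.mkₐ_eq_mk]
    rw [Ideal.Quotient.eq, hJ, Ideal.mem_span_singleton]
    exact ⟨-φ B, by ring⟩
  · intro P
    simp only [AlgHom.comp_apply, Ideal.Quotient.mkₐ_eq_mk]
    rw [Ideal.Quotient.eq_zero_iff_mem, hJ, Ideal.mem_span_singleton]
    constructor
    · rintro ⟨f, hf⟩
      obtain ⟨A, B, rfl⟩ := hex f
      refine ⟨B, ?_⟩
      have := (huniq (P - D * B) (-A) (by simp only [map_sub, map_mul, map_neg, hf, ← hz]; ring)).1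
      linear_combination this
    · rintro ⟨B, rfl⟩
      exact ⟨z * φ B, by rw [map_mul, ← hz]; ring⟩

/-- Division by `X ^ (2k + 1) + 4 Z ^ 2`, of degree two in `Z`, where `X = X 0` and `Z = X 1`. -/
lemma normal_form (k : ℕ) (P : P2) : ∃ (a b : Polynomial ℂ) (c : P2),
    P = Polynomial.aeval (X 0 : P2) a + X 1 * Polynomial.aeval (X 0 : P2) b
      + ((X 0) ^ (2 * k + 1) + 4 * (X 1) ^ 2) * c := by
  induction P using MvPolynomial.induction_on with
  | C r => exact ⟨Polynomial.C r, 0, 0, by simp [MvPolynomial.algebraMap_eq]⟩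
  | add p q hp hq =>
    obtain ⟨a, b, c, rfl⟩ := hp
    obtain ⟨a', b', c', rfl⟩ := hq
    exact ⟨a + a', b + b', c + c', by simp only [map_add]; ring⟩
  | mul_X p i hp =>
    obtain ⟨a, b, c, rfl⟩ := hp
    have h4 : (4 : P2) * C (1/4) = 1 := by
      rw [show (4 : P2) = C 4 from (map_ofNat C 4).symm, ← C_mul]; norm_num
    fin_cases i
    · exact ⟨a * Polynomial.X, b * Polynomial.X, c * X 0, by
        simp only [map_mul, Polynomial.aeval_X, Fin.zero_eta]; ring⟩
    · refine ⟨-Polynomial.C (1/4) * Polynomial.X ^ (2 * k + 1) * b, a,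
        c * X 1 + C (1/4) * Polynomial.aeval (X 0 : P2) b, ?_⟩
      simp only [map_mul, map_neg, map_pow, Polynomial.aeval_X, Fin.mk_one, Polynomial.aeval_C,
        MvPolynomial.algebraMap_eq]
      linear_combination (-(X 1) ^ 2 * Polynomial.aeval (X 0 : P2) b) * h4

/-- `X ^ (2k + 1) + 4 Z ^ 2` is radical: it generates the kernel of the parametrisation
`X ↦ -t ^ 2`, `Z ↦ t ^ (2k + 1) / 2` into `ℂ[t]`. -/
lemma prime_E (k : ℕ) (P : P2) (N : ℕ)
    (h : ((X 0 : P2) ^ (2 * k + 1) + 4 * (X 1) ^ 2) ∣ P ^ N) :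
    ((X 0 : P2) ^ (2 * k + 1) + 4 * (X 1) ^ 2) ∣ P := by
  let π : P2 →ₐ[ℂ] Polynomial ℂ :=
    aeval ![-Polynomial.X ^ 2, Polynomial.C (1/2) * Polynomial.X ^ (2 * k + 1)]
  have h0 : π (X 0) = -Polynomial.X ^ 2 := by simp [π]
  have h1 : π (X 1) = Polynomial.C (1/2) * Polynomial.X ^ (2 * k + 1) := by simp [π]
  have hE : π ((X 0 : P2) ^ (2 * k + 1) + 4 * (X 1) ^ 2) = 0 := by
    have h4 : (4 : Polynomial ℂ) * Polynomial.C (1/2) ^ 2 = 1 := by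
      rw [show (4 : Polynomial ℂ) = Polynomial.C 4 from (map_ofNat Polynomial.C 4).symm, ← Polynomial.C_pow, ← Polynomial.C_mul]
      norm_num
    rw [map_add, map_mul, map_pow, map_pow, h0, h1, map_ofNat, Odd.neg_pow ⟨k, rfl⟩]
    linear_combination (Polynomial.X ^ (2 * k + 1)) ^ 2 * h4
  have hP : π P = 0 := by
    obtain ⟨c, hc⟩ := h
    have : (π P) ^ N = 0 := by rw [← map_pow, hc, map_mul, hE, zero_mul]
    exact eq_zero_of_pow_eq_zero this
  obtain ⟨a, b, c, rfl⟩ := normal_form k P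
  rw [map_add, map_mul, hE, zero_mul, add_zero, map_add, map_mul, h1,
    ← Polynomial.aeval_algHom_apply, ← Polynomial.aeval_algHom_apply, h0] at hP
  -- In `a(-t²) + t^(2k+1) b(-t²) / 2 = 0` the first summand is even and the second odd in `t`, so
  -- substituting `-t` for `t` separates them.
  have hP2 := congrArg (Polynomial.aeval (-Polynomial.X : Polynomial ℂ)) hP
  rw [map_add, map_mul, map_mul, map_pow, ← Polynomial.aeval_algHom_apply,
    ← Polynomial.aeval_algHom_apply, map_neg, map_pow, Polynomial.aeval_X, Polynomial.aeval_C,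
    Polynomial.algebraMap_eq, neg_sq, Odd.neg_pow ⟨k, rfl⟩, map_zero] at hP2
  have inj : ∀ q : Polynomial ℂ, Polynomial.aeval (-Polynomial.X ^ 2 : Polynomial ℂ) q = 0 → q = 0 := by
    intro q hq
    have : q.comp (-Polynomial.X ^ 2) = 0 := hq
    rw [Polynomial.comp_eq_zero_iff] at this
    rcases this with h | ⟨_, h⟩
    · exact h
    · have := congrArg (fun p => Polynomial.coeff p 2) h
      simp at this
  have ha : a = 0 := by
    apply inj
    have h2 : (2 : Polynomial ℂ) ≠ 0 := two_ne_zero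
    apply mul_left_cancel₀ h2
    linear_combination hP + hP2
  have hb : b = 0 := by
    apply inj
    have h2 : (2 : Polynomial ℂ) * (Polynomial.C (1/2) * Polynomial.X ^ (2 * k + 1)) ≠ 0 := by simp
    apply mul_left_cancel₀ h2
    linear_combination hP - hP2
  subst ha hb
  exact ⟨c, by simp⟩

/-- Part (II) for any algebra `R = φ(ℂ[X, Y]) ⊕ z φ(ℂ[X, Y])` with
`z ^ 2 = φ (X Y (Y - X ^ k))`. In the quotient `φ(Y)` becomes `φ(X) ^ k / 2`. -/
lemma partII {R : Type*} [CommRing R] [Algebra ℂ R] (k : ℕ) (φ : P2 →ₐ[ℂ] R) (z : R)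
    (hz : z ^ 2 = φ (X 0 * X 1 * (X 1 - X 0 ^ k))) (hex : ∀ f, ∃ A B, f = φ A + z * φ B)
    (huniq : ∀ A B, φ A + z * φ B = 0 → A = 0 ∧ B = 0)
    (θ : R ≃ₐ[ℂ] R) (hθx : θ (φ (X 0)) = φ (X 0)) (hθy : θ (φ (X 1)) = φ (X 0) ^ k - φ (X 1))
    (hθz : θ z = z) :
    Ideal.span (Set.range fun f => θ f - f) = Ideal.span {2 * φ (X 1) - φ (X 0) ^ k} ∧
    ∃ e : (R ⧸ Ideal.span (Set.range fun f => θ f - f)) ≃ₐ[ℂ]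
        (P2 ⧸ Ideal.span {(X 0 : P2) ^ (2 * k + 1) + 4 * (X 1) ^ 2}),
      e (Ideal.Quotient.mk _ (φ (X 0))) = Ideal.Quotient.mk _ (X 0) ∧
      e (Ideal.Quotient.mk _ z) = Ideal.Quotient.mk _ (X 1) := by
  set w : R := 2 * φ (X 1) - φ (X 0) ^ k with hw
  have hJ : Ideal.span (Set.range fun f => θ f - f) = Ideal.span {w} := by
    apply le_antisymm
    · rw [Ideal.span_le]
      rintro _ ⟨f, rfl⟩
      rw [SetLike.mem_coe, ← Ideal.Quotient.eq]
      have hA : ((Ideal.Quotient.mkₐ ℂ (Ideal.span {w})).comp (θ : R →ₐ[ℂ] R)).comp φ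
          = (Ideal.Quotient.mkₐ ℂ (Ideal.span {w})).comp φ := by
        apply MvPolynomial.algHom_ext
        intro i
        fin_cases i
        · change Ideal.Quotient.mk _ (θ (φ (X 0))) = Ideal.Quotient.mk _ (φ (X 0))
          rw [hθx]
        · change Ideal.Quotient.mk _ (θ (φ (X 1))) = Ideal.Quotient.mk _ (φ (X 1))
          rw [hθy, Ideal.Quotient.eq, Ideal.mem_span_singleton]
          exact ⟨-1, by rw [hw]; ring⟩
      have hA' : ∀ A, Ideal.Quotient.mk (Ideal.span {w}) (θ (φ A))
          = Ideal.Quotient.mk (Ideal.span {w}) (φ A) := fun A => DFunLike.congr_fun hA A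
      obtain ⟨A, B, rfl⟩ := hex f
      simp only [map_add, map_mul, hθz, hA']
    · rw [Ideal.span_singleton_le_iff_mem]
      refine Ideal.subset_span ⟨-φ (X 1), ?_⟩
      simp only [map_neg, hθy, hw]
      ring
  have hhalf : (2 : P2) * C (1/2) = 1 := by
    rw [show (2 : P2) = C 2 from (map_ofNat C 2).symm, ← C_mul]; norm_num
  refine ⟨hJ, ?_⟩
  let q : R →ₐ[ℂ] (R ⧸ Ideal.span (Set.range fun f => θ f - f)) := Ideal.Quotient.mkₐ ℂ _
  let χ : P2 →ₐ[ℂ] R := aeval ![φ (X 0), z]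
  have hχ0 : χ (X 0) = φ (X 0) := by simp [χ]
  have hχ1 : χ (X 1) = z := by simp [χ]
  have hqw : ∀ r, q r = 0 ↔ w ∣ r := by
    intro r
    rw [← Ideal.mem_span_singleton, ← hJ]
    exact Ideal.Quotient.eq_zero_iff_mem
  have hy : q (φ (X 1)) = q (χ (C (1/2) * X 0 ^ k)) := by
    rw [← sub_eq_zero, ← map_sub, hqw]
    refine ⟨φ (C (1/2)), ?_⟩
    have h2 := congrArg φ hhalf
    simp only [map_mul, map_ofNat, map_one] at h2
    have hC : χ (C (1/2)) = φ (C (1/2)) := by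
      rw [← MvPolynomial.algebraMap_eq, AlgHom.commutes, AlgHom.commutes]
    rw [map_mul, map_pow, hχ0, hC, hw]
    linear_combination -φ (X 1) * h2
  have hφ : ∀ A, ∃ A', q (φ A) = q (χ A') := by
    intro A
    refine ⟨aeval ![(X 0 : P2), C (1/2) * X 0 ^ k] A, ?_⟩
    have : q.comp φ = (q.comp χ).comp (aeval ![(X 0 : P2), C (1/2) * X 0 ^ k]) := by
      apply MvPolynomial.algHom_ext
      intro i
      fin_cases i
      · simp [hχ0]
      · simpa using hy
    exact DFunLike.congr_fun this A
  obtain ⟨e, he⟩ := quot_equiv _ ((X 0 : P2) ^ (2 * k + 1) + 4 * (X 1) ^ 2) (q.comp χ) (by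
    intro f
    obtain ⟨f, rfl⟩ := Ideal.Quotient.mk_surjective f
    obtain ⟨A, B, rfl⟩ := hex f
    obtain ⟨A', hA'⟩ := hφ A
    obtain ⟨B', hB'⟩ := hφ B
    refine ⟨A' + X 1 * B', ?_⟩
    change q (χ _) = q _
    simp only [map_add, map_mul, hA', hB', hχ1]) (by
    intro P
    rw [AlgHom.comp_apply]
    have hE : q (χ ((X 0 : P2) ^ (2 * k + 1) + 4 * (X 1) ^ 2)) = 0 := by
      rw [hqw]
      refine ⟨φ (X 0 * (2 * X 1 - X 0 ^ k)), ?_⟩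
      simp only [map_add, map_mul, map_pow, hχ0, hχ1, map_ofNat, hz, map_sub, hw]
      ring
    constructor
    · obtain ⟨a, b, c, rfl⟩ := normal_form k P
      rw [map_add, map_add, map_mul χ _ c, map_mul q, hE, zero_mul, add_zero, hqw]
      rintro ⟨f, hf⟩
      obtain ⟨A, B, rfl⟩ := hex f
      rw [map_add, map_mul, hχ1, ← Polynomial.aeval_algHom_apply, ← Polynomial.aeval_algHom_apply,
        hχ0, Polynomial.aeval_algHom_apply, Polynomial.aeval_algHom_apply] at hf
      have h := huniq (Polynomial.aeval (X 0 : P2) a - (2 * X 1 - X 0 ^ k) * A)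
        (Polynomial.aeval (X 0 : P2) b - (2 * X 1 - X 0 ^ k) * B) (by
          simp only [map_sub, map_mul, map_pow, map_ofNat]
          rw [hw] at hf
          linear_combination hf)
      -- restriction to the curve `Y = X ^ k / 2`
      let ρ : P2 →ₐ[ℂ] Polynomial ℂ := aeval ![Polynomial.X, Polynomial.C (1/2) * Polynomial.X ^ k]
      have hρ : ∀ (a : Polynomial ℂ) (A : P2),
          Polynomial.aeval (X 0 : P2) a - (2 * X 1 - X 0 ^ k) * A = 0 → a = 0 := by
        intro a A h
        have h' := congrArg ρ h
        have h2 : (2 : Polynomial ℂ) * Polynomial.C (1/2) = 1 := by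
          rw [show (2 : Polynomial ℂ) = Polynomial.C 2 from (map_ofNat Polynomial.C 2).symm, ← Polynomial.C_mul]
          norm_num
        have e0 : ρ (X 0) = Polynomial.X := by simp [ρ]
        have e1 : ρ (X 1) = Polynomial.C (1/2) * Polynomial.X ^ k := by simp [ρ]
        rw [map_sub, map_mul, map_sub, map_mul, map_pow, map_ofNat,
          ← Polynomial.aeval_algHom_apply, e0, e1, Polynomial.aeval_X_left_apply, map_zero] at h'
        linear_combination h' + (Polynomial.X ^ k * ρ A) * h2
      rw [hρ a A h.1, hρ b B h.2]
      exact ⟨c, by simp⟩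
    · rintro ⟨c, rfl⟩
      rw [map_mul, map_mul, hE, zero_mul])
  refine ⟨e, ?_, ?_⟩
  · have := he (X 0)
    rwa [AlgHom.comp_apply, hχ0] at this
  · have := he (X 1)
    rwa [AlgHom.comp_apply, hχ1] at this

/-! ### Reducedness of `ℂ[X, Y] / (X Y (Y - X ^ k))` -/

lemma radical_D (k : ℕ) (hk : 0 < k) :
    IsRadical ((X 0 : P2) * X 1 * ((X 1 : P2) - (X 0 : P2) ^ k)) := by
  have h0 : Prime (X 0 : P2) := X_prime
  have h1 : Prime (X 1 : P2) := X_prime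
  -- `Y - X ^ k` is the image of the prime `Y` under an automorphism of `ℂ[X, Y]`.
  have h2 : Prime ((X 1 : P2) - (X 0 : P2) ^ k) := by
    let α : P2 ≃ₐ[ℂ] P2 := AlgEquiv.ofAlgHom (aeval ![X 0, X 1 - X 0 ^ k])
      (aeval ![X 0, X 1 + X 0 ^ k])
      (by apply MvPolynomial.algHom_ext; intro i; fin_cases i <;> simp)
      (by apply MvPolynomial.algHom_ext; intro i; fin_cases i <;> simp)
    have : α (X 1) = (X 1 : P2) - (X 0 : P2) ^ k := by simp [α]
    rw [← this]
    exact (MulEquiv.prime_iff α).2 h1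
  have n01 : ¬ (X 0 : P2) ∣ X 1 := by
    rintro ⟨c, hc⟩
    have := congrArg (eval ![(0 : ℂ), 1]) hc
    simp at this
  have n02 : ¬ (X 0 : P2) ∣ ((X 1 : P2) - (X 0 : P2) ^ k) := by
    rintro ⟨c, hc⟩
    have := congrArg (eval ![(0 : ℂ), 1]) hc
    simp [hk.ne'] at this
  have n12 : ¬ (X 1 : P2) ∣ ((X 1 : P2) - (X 0 : P2) ^ k) := by
    rintro ⟨c, hc⟩
    have := congrArg (eval ![(1 : ℂ), 0]) hc
    simp at this
  apply Squarefree.isRadical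
  rw [squarefree_mul_iff, squarefree_mul_iff]
  exact ⟨IsRelPrime.mul_left (h0.irreducible.isRelPrime_iff_not_dvd.2 n02)
    (h1.irreducible.isRelPrime_iff_not_dvd.2 n12),
    ⟨h0.irreducible.isRelPrime_iff_not_dvd.2 n01, h0.irreducible.squarefree,
      h1.irreducible.squarefree⟩, h2.irreducible.squarefree⟩

/-! ### Algebraic independence and uniqueness of the decomposition -/

/-- The invariant `x = u² v²`. -/
def xP : P2 := X 0 ^ 2 * X 1 ^ 2

/-- The invariant `y`, for `n = 2k + 2`. -/
def yP (k : ℕ) : P2 :=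
  C (-(1/4) : ℂ) * (X 0 ^ (4 * k) - 2 * X 0 ^ (2 * k) * X 1 ^ (2 * k) + X 1 ^ (4 * k))

/-- The invariant `z`, for `n = 2k + 2`. -/
def zP (k : ℕ) : P2 := C ((1/4) : ℂ) * (X 0 * X 1 * (X 0 ^ (4 * k) - X 1 ^ (4 * k)))

/-- The substitution `X ↦ x`, `Y ↦ y` from `ℂ[X, Y]` to `ℂ[u, v]`. -/
def phi (k : ℕ) : P2 →ₐ[ℂ] P2 := aeval ![xP, yP k]

lemma phi_X0 (k : ℕ) : phi k (X 0) = xP := by simp [phi]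

lemma phi_X1 (k : ℕ) : phi k (X 1) = yP k := by simp [phi]

lemma phi_C (k : ℕ) (c : ℂ) : phi k (C c) = C c := by simp [phi]

lemma C_quarter : (4 : P2) * C (1/4) = 1 := by
  rw [show (4 : P2) = C 4 from (map_ofNat C 4).symm, ← C_mul]; norm_num

lemma zP_sq (k : ℕ) : zP k ^ 2 = phi k (X 0 * X 1 * (X 1 - X 0 ^ k)) := by
  have h := C_quarter
  simp only [map_mul, map_sub, map_pow, phi_X0, phi_X1, zP, yP, xP, C_neg]
  have e1 : ((X 0 : P2) ^ 2 * X 1 ^ 2) ^ k = X 0 ^ (2 * k) * X 1 ^ (2 * k) := by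
    rw [mul_pow, pow_mul, pow_mul]
  have e2 : ∀ i : Fin 2, (X i : P2) ^ (4 * k) = (X i ^ (2 * k)) ^ 2 := by
    intro i; rw [← pow_mul]; congr 1; ring
  rw [e1, e2, e2]
  generalize (X 0 : P2) ^ (2 * k) = a
  generalize (X 1 : P2) ^ (2 * k) = b
  generalize (C (1/4) : P2) = c at *
  linear_combination ((X 0 : P2) ^ 2 * X 1 ^ 2 * c * (a - b) ^ 2 * a * b) * h

/-- `x, y` are algebraically independent: a relation would vanish at every point of `ℂ²`, since
`(u, v) ↦ (x, y)` is surjective. -/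
lemma phi_inj (k : ℕ) (hk : 0 < k) (A : P2) (h : phi k A = 0) : A = 0 := by
  apply MvPolynomial.funext
  intro s
  rw [map_zero]
  have key : ∃ u v : ℂ, u ^ 2 * v ^ 2 = s 0 ∧ (u ^ (2 * k) - v ^ (2 * k)) ^ 2 = -4 * s 1 := by
    have hk2 : 0 < 2 * k := by omega
    -- With `p = u v` and `c = u ^ (2k) - v ^ (2k)` prescribed, `t = u ^ (2k)` has to solve
    -- `t (t - c) = p ^ (2k)`.
    obtain ⟨p, hp⟩ := IsAlgClosed.exists_pow_nat_eq (s 0) (n := 2) (by norm_num)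
    obtain ⟨c, hc⟩ := IsAlgClosed.exists_pow_nat_eq (-4 * s 1) (n := 2) (by norm_num)
    obtain ⟨d, hd⟩ := IsAlgClosed.exists_pow_nat_eq (c ^ 2 + 4 * p ^ (2 * k)) (n := 2) (by norm_num)
    have ht : ((c + d) / 2) * ((c + d) / 2 - c) = p ^ (2 * k) := by
      linear_combination hd / 4
    generalize (c + d) / 2 = t at ht
    by_cases ht0 : t = 0
    · obtain ⟨v, hv⟩ := IsAlgClosed.exists_pow_nat_eq (-c) hk2
      have hp0 : p = 0 := by
        rw [ht0, zero_mul] at ht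
        exact eq_zero_of_pow_eq_zero ht.symm
      refine ⟨0, v, ?_, ?_⟩
      · rw [← hp, hp0]; ring
      · rw [hv, zero_pow hk2.ne', ← hc]; ring
    · obtain ⟨u, hu⟩ := IsAlgClosed.exists_pow_nat_eq t hk2
      have hu0 : u ≠ 0 := by
        rintro rfl
        rw [zero_pow hk2.ne'] at hu
        exact ht0 hu.symm
      refine ⟨u, p / u, ?_, ?_⟩
      · rw [← hp]; field_simp
      · rw [div_pow, hu, ← ht, ← hc, mul_div_cancel_left₀ _ ht0]; ring
  obtain ⟨u, v, h1, h2⟩ := key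
  have h3 : (eval ![u, v]) (phi k A) = eval s A := by
    have : (aeval ![u, v] : P2 →ₐ[ℂ] ℂ).comp (phi k) = aeval s := by
      apply MvPolynomial.algHom_ext
      intro i
      fin_cases i
      · simp [phi_X0, xP, h1]
      · simp only [Fin.mk_one, AlgHom.comp_apply, phi_X1, yP, aeval_X]
        simp only [map_mul, map_add, map_sub, map_pow, aeval_X, map_ofNat, aeval_C]
        simp only [cons_val_zero, cons_val_one, Algebra.algebraMap_self, RingHom.id_apply]
        have e2 : ∀ i : ℂ, i ^ (4 * k) = (i ^ (2 * k)) ^ 2 := by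
          intro i; rw [← pow_mul]; congr 1; ring
        rw [e2, e2]
        linear_combination (-1/4) * h2
    exact DFunLike.congr_fun this A
  rw [← h3, h, map_zero]

lemma phi_uniq (k : ℕ) (hk : 0 < k) (A B : P2) (h : phi k A + zP k * phi k B = 0) :
    A = 0 ∧ B = 0 := by
  let σ : P2 →ₐ[ℂ] P2 := aeval ![X 1, X 0]
  have s0 : σ (X 0) = X 1 := by simp [σ]
  have s1 : σ (X 1) = X 0 := by simp [σ]
  have sC : ∀ c, σ (C c) = C c := by simp [σ]
  have hσ : ∀ A, σ (phi k A) = phi k A := by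
    intro A
    have : σ.comp (phi k) = phi k := by
      apply MvPolynomial.algHom_ext
      intro i
      fin_cases i
      · simp only [Fin.zero_eta, AlgHom.comp_apply, phi_X0, xP, map_mul, map_pow, s0, s1]
        ring
      · simp only [Fin.mk_one, AlgHom.comp_apply, phi_X1, yP, map_mul, map_pow, map_add, map_sub,
          s0, s1, sC, map_ofNat]
        ring
    exact DFunLike.congr_fun this A
  have hz : σ (zP k) = -zP k := by
    simp only [zP, map_mul, map_pow, map_sub, s0, s1, sC]
    ring
  have h' := congrArg σ h
  rw [map_add, map_mul, hσ, hσ, hz, map_zero] at h'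
  have hz0 : zP k ≠ 0 := by
    intro h0
    have := congrArg (eval ![(2 : ℂ), 1]) h0
    simp [zP, sub_eq_zero] at this
    have h1 : (2 : ℕ) ^ (4 * k) = 1 := by exact_mod_cast this
    have h2 : 1 < 2 ^ (4 * k) := Nat.one_lt_two_pow (by omega)
    omega
  have h2 : (2 : P2) ≠ 0 := two_ne_zero
  constructor
  · apply phi_inj k hk
    apply mul_left_cancel₀ h2
    linear_combination h + h'
  · apply phi_inj k hk
    apply mul_left_cancel₀ (mul_ne_zero h2 hz0)
    linear_combination h - h'


/-! ### Existence of the decomposition -/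

lemma phi_sum (k : ℕ) : phi k (-4 * X 1 + 2 * X 0 ^ k) = X 0 ^ (4 * k) + X 1 ^ (4 * k) := by
  have e1 : ((X 0 : P2) ^ 2 * X 1 ^ 2) ^ k = X 0 ^ (2 * k) * X 1 ^ (2 * k) := by
    rw [mul_pow, pow_mul, pow_mul]
  simp only [map_add, map_mul, map_neg, map_ofNat, map_pow, phi_X0, phi_X1, xP, yP, e1]
  linear_combination ((X 0 : P2) ^ (4 * k) - 2 * X 0 ^ (2 * k) * X 1 ^ (2 * k)
    + X 1 ^ (4 * k)) * C_quarter

lemma phi_prod (k : ℕ) : phi k (X 0 ^ (2 * k)) = X 0 ^ (4 * k) * X 1 ^ (4 * k) := by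
  rw [map_pow, phi_X0, xP, mul_pow, ← pow_mul, ← pow_mul]
  congr 2 <;> ring

/-- `U ^ j + V ^ j` lies in `ℂ[x, y]` for `U = u ^ (4k)`, `V = v ^ (4k)`, by the recursion
`p (j + 2) = (U + V) p (j + 1) - U V p j`. -/
lemma psum_mem (k : ℕ) : ∀ j : ℕ, ∃ A,
    phi k A = ((X 0 : P2) ^ (4 * k)) ^ j + (X 1 ^ (4 * k)) ^ j
  | 0 => ⟨2, by rw [map_ofNat]; ring⟩
  | 1 => ⟨_, by rw [phi_sum]; ring⟩
  | j + 2 => by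
    obtain ⟨A, hA⟩ := psum_mem k j
    obtain ⟨B, hB⟩ := psum_mem k (j + 1)
    refine ⟨(-4 * X 1 + 2 * X 0 ^ k) * B - X 0 ^ (2 * k) * A, ?_⟩
    rw [map_sub, map_mul, map_mul, phi_sum, phi_prod, hA, hB]
    ring

/-- `u v (U ^ j - V ^ j)` lies in `z ℂ[x, y]`, by the same recursion as `psum_mem`. -/
lemma qsum_mem (k : ℕ) : ∀ j : ℕ, ∃ A,
    zP k * phi k A = X 0 * X 1 * (((X 0 : P2) ^ (4 * k)) ^ j - (X 1 ^ (4 * k)) ^ j)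
  | 0 => ⟨0, by rw [map_zero]; ring⟩
  | 1 => ⟨4, by
      rw [map_ofNat, zP]
      linear_combination X 0 * X 1 * ((X 0 : P2) ^ (4 * k) - X 1 ^ (4 * k)) * C_quarter⟩
  | j + 2 => by
    obtain ⟨A, hA⟩ := qsum_mem k j
    obtain ⟨B, hB⟩ := qsum_mem k (j + 1)
    refine ⟨(-4 * X 1 + 2 * X 0 ^ k) * B - X 0 ^ (2 * k) * A, ?_⟩
    rw [map_sub, map_mul, map_mul, phi_sum, phi_prod]
    linear_combination (X 0 ^ (4 * k) + X 1 ^ (4 * k)) * hB - X 0 ^ (4 * k) * X 1 ^ (4 * k) * hA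

/-- `p` lies in `ℂ[x, y] + z ℂ[x, y]`. -/
def Dec (k : ℕ) (p : P2) : Prop := ∃ A B, p = phi k A + zP k * phi k B

lemma Dec.add {k : ℕ} {p q : P2} (hp : Dec k p) (hq : Dec k q) : Dec k (p + q) := by
  obtain ⟨A, B, rfl⟩ := hp
  obtain ⟨A', B', rfl⟩ := hq
  exact ⟨A + A', B + B', by simp only [map_add]; ring⟩

lemma Dec.phi_mul {k : ℕ} {p : P2} (hp : Dec k p) (M : P2) : Dec k (phi k M * p) := by
  obtain ⟨A, B, rfl⟩ := hp
  exact ⟨M * A, M * B, by simp only [map_mul]; ring⟩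

lemma Dec.C_mul {k : ℕ} {p : P2} (hp : Dec k p) (c : ℂ) : Dec k (C c * p) := by
  have := hp.phi_mul (C c)
  rwa [phi_C] at this

/-- The `(uv)^a`-multiple of `U ^ j + (-1) ^ a V ^ j` decomposes, for either parity of `a`. -/
lemma dec_base (k a j : ℕ) : Dec k ((X 0 * X 1) ^ a *
    (((X 0 : P2) ^ (4 * k)) ^ j + (-1) ^ a * (X 1 ^ (4 * k)) ^ j)) := by
  obtain ⟨i, rfl | rfl⟩ := Nat.even_or_odd' a
  · obtain ⟨A, hA⟩ := psum_mem k j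
    refine ⟨X 0 ^ i * A, 0, ?_⟩
    rw [map_mul, hA, map_pow, phi_X0, xP, map_zero, pow_mul, pow_mul, mul_pow]
    simp
  · obtain ⟨A, hA⟩ := qsum_mem k j
    refine ⟨0, X 0 ^ i * A, ?_⟩
    rw [map_mul, map_pow, phi_X0, map_zero, mul_left_comm, hA, xP, pow_succ, pow_mul,
      Odd.neg_one_pow ⟨i, rfl⟩, mul_pow]
    ring

/-- Symmetrising `u ^ a v ^ b` under `u ↦ -v`, `v ↦ u` gives a decomposable element when
`a ≡ b` modulo `4k`. -/
lemma dec_sym (k a b : ℕ) (h : a ≡ b [MOD 4 * k]) :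
    Dec k ((X 0 : P2) ^ a * X 1 ^ b + (-X 1) ^ a * X 0 ^ b) := by
  rcases le_total a b with hab | hab
  · obtain ⟨j, hj⟩ := (Nat.modEq_iff_dvd' hab).1 h
    obtain rfl : b = a + 4 * k * j := by omega
    have h1 : (-1 : P2) ^ a * (-1) ^ a = 1 := by rw [← mul_pow]; simp
    have h2 := (dec_base k a j).C_mul ((-1) ^ a)
    convert h2 using 1
    simp only [map_pow, C_neg, C_1]
    rw [neg_pow (X 1 : P2), pow_add, pow_add, pow_mul _ (4 * k) j, pow_mul _ (4 * k) j, mul_pow]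
    linear_combination (-(X 0 : P2) ^ a * X 1 ^ a * (X 1 ^ (4 * k)) ^ j) * h1
  · obtain ⟨j, hj⟩ := (Nat.modEq_iff_dvd' hab).1 h.symm
    obtain rfl : a = b + 4 * k * j := by omega
    have h2 := dec_base k b j
    convert h2 using 1
    have h1 : (-1 : P2) ^ (b + 4 * k * j) = (-1) ^ b := by
      rw [pow_add, mul_assoc, pow_mul (-1 : P2) 4]
      norm_num
    rw [neg_pow (X 1 : P2), h1, pow_add, pow_add, pow_mul _ (4 * k) j, pow_mul _ (4 * k) j, mul_pow]
    ring

/-- The diagonal substitution `X i ↦ a i X i` scales each coefficient. -/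
lemma coeff_scale (a : Fin 2 → ℂ) (f : P2) (d : Fin 2 →₀ ℕ) :
    coeff d (aeval (fun i => C (a i) * X i : Fin 2 → P2) f) = (a 0 ^ d 0 * a 1 ^ d 1) * coeff d f := by
  induction f using MvPolynomial.induction_on' with
  | monomial e c =>
    have : aeval (fun i => C (a i) * X i : Fin 2 → P2) (monomial e c)
        = monomial e (a 0 ^ e 0 * a 1 ^ e 1 * c) := by
      rw [aeval_monomial, Finsupp.prod_fintype _ _ (by simp), Fin.prod_univ_two,
        MvPolynomial.algebraMap_eq, monomial_eq, Finsupp.prod_fintype _ _ (by simp),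
        Fin.prod_univ_two]
      simp only [map_mul, map_pow]
      ring
    rw [this, coeff_monomial, coeff_monomial]
    split_ifs with h
    · rw [h]
    · simp
  | add p q hp hq => rw [map_add, coeff_add, coeff_add, hp, hq]; ring

lemma slAct_eq_of_mem {Γ : Subgroup SL2} {f : P2} (hf : f ∈ invRing Γ) {g : SL2} (hg : g ∈ Γ) :
    slAct g f = f := by
  rw [invRing, Algebra.mem_iInf] at hf
  exact hf ⟨g, hg⟩

/-- Every invariant lies in `ℂ[x, y] + z ℂ[x, y]`. -/
lemma dec_of_mem (k : ℕ) (hk : 0 < k) (Γ : Subgroup SL2)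
    (hΓ : ∀ g : SL2, g ∈ Γ ↔ ∃ ε : ℂ, ε ^ (4 * k) = 1 ∧
      ((g : Matrix (Fin 2) (Fin 2) ℂ) = !![ε, 0; 0, ε⁻¹] ∨
       (g : Matrix (Fin 2) (Fin 2) ℂ) = !![0, ε; -ε⁻¹, 0]))
    (f : P2) (hf : f ∈ invRing Γ) : Dec k f := by
  have h4k : 4 * k ≠ 0 := by omega
  -- invariance under the cyclic part restricts the monomials that occur
  have hsupp : ∀ d ∈ f.support, d 0 ≡ d 1 [MOD 4 * k] := by
    intro d hd
    obtain ⟨ε, hε⟩ : ∃ ε : ℂ, IsPrimitiveRoot ε (4 * k) :=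
      ⟨_, Complex.isPrimitiveRoot_exp _ h4k⟩
    have hε0 : ε ≠ 0 := hε.ne_zero h4k
    let g : SL2 := ⟨!![ε, 0; 0, ε⁻¹], by simp [Matrix.det_fin_two, hε0]⟩
    have hg : g ∈ Γ := (hΓ g).2 ⟨ε, hε.pow_eq_one, Or.inl rfl⟩
    have h1 := slAct_eq_of_mem hf hg
    have hinv : ((g⁻¹ : SL2) : Matrix (Fin 2) (Fin 2) ℂ) = !![ε⁻¹, 0; 0, ε] := by
      rw [Matrix.SpecialLinearGroup.coe_inv, show (g : Matrix (Fin 2) (Fin 2) ℂ) =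
        !![ε, 0; 0, ε⁻¹] from rfl, Matrix.adjugate_fin_two_of, neg_zero]
    have h2 : slAct g = aeval (fun i => C (![ε⁻¹, ε] i) * X i : Fin 2 → P2) := by
      apply MvPolynomial.algHom_ext
      intro i
      fin_cases i <;> simp [slAct, matSub, hinv]
    have h3 := congrArg (coeff d) h1
    rw [h2, coeff_scale] at h3
    have h4 : coeff d f ≠ 0 := mem_support_iff.1 hd
    have h5 : ε⁻¹ ^ d 0 * ε ^ d 1 = 1 := by
      apply mul_right_cancel₀ h4
      simpa using h3
    have h6 : ε ^ d 0 = ε ^ d 1 := by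
      rw [inv_pow, inv_mul_eq_one₀ (pow_ne_zero _ hε0)] at h5
      exact h5
    have hu : (Units.mk0 ε hε0) ^ d 0 = (Units.mk0 ε hε0) ^ d 1 := by
      ext; simpa using h6
    rw [pow_eq_pow_iff_modEq, ← orderOf_units, Units.val_mk0, ← hε.eq_orderOf] at hu
    exact hu
  -- The action of the matrix `!![0, 1; -1, 0]`.
  let τ : P2 →ₐ[ℂ] P2 := aeval ![-X 1, X 0]
  have hτ : τ f = f := by
    let g : SL2 := ⟨!![0, 1; -1, 0], by simp [Matrix.det_fin_two]⟩
    have hg : g ∈ Γ := (hΓ g).2 ⟨1, one_pow _, Or.inr (by simp [g])⟩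
    have h1 := slAct_eq_of_mem hf hg
    have hinv : ((g⁻¹ : SL2) : Matrix (Fin 2) (Fin 2) ℂ) = !![0, -1; 1, 0] := by
      rw [Matrix.SpecialLinearGroup.coe_inv, show (g : Matrix (Fin 2) (Fin 2) ℂ) =
        !![0, 1; -1, 0] from rfl, Matrix.adjugate_fin_two_of, neg_neg]
    have h2 : slAct g = τ := by
      apply MvPolynomial.algHom_ext
      intro i
      fin_cases i <;> simp [slAct, matSub, hinv, τ]
    rwa [h2] at h1
  have hsum : f + τ f = ∑ d ∈ f.support, C (coeff d f) *
      ((X 0 : P2) ^ d 0 * X 1 ^ d 1 + (-X 1) ^ d 0 * X 0 ^ d 1) := by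
    have h : f = ∑ d ∈ f.support, C (coeff d f) * ((X 0 : P2) ^ d 0 * X 1 ^ d 1) := by
      conv_lhs => rw [MvPolynomial.as_sum f]
      refine Finset.sum_congr rfl fun d _ => ?_
      rw [monomial_eq, Finsupp.prod_fintype _ _ (by simp), Fin.prod_univ_two]
    have h' := congrArg τ h
    rw [map_sum] at h'
    rw [h']
    nth_rewrite 1 [h]
    rw [← Finset.sum_add_distrib]
    refine Finset.sum_congr rfl fun d _ => ?_
    have t0 : τ (X 0) = -X 1 := by simp [τ]
    have t1 : τ (X 1) = X 0 := by simp [τ]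
    have tC : ∀ c, τ (C c) = C c := by simp [τ]
    simp only [map_mul, map_pow, t0, t1, tC]
    ring
  have hdec : Dec k (f + τ f) := by
    rw [hsum]
    refine Finset.sum_induction _ (Dec k) (fun _ _ => Dec.add) ⟨0, 0, by simp⟩ fun d hd => ?_
    exact (dec_sym k _ _ (hsupp d hd)).C_mul _
  have h2 : f = C (1/2) * (f + τ f) := by
    have : (2 : P2) * C (1/2) = 1 := by
      rw [show (2 : P2) = C 2 from (map_ofNat C 2).symm, ← MvPolynomial.C_mul]; norm_num
    rw [hτ]
    linear_combination -f * this
  rw [h2]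
  exact hdec.C_mul _

/-- fixed point loci of the anti-Poisson involutions in type `Dₙ`, `n` even. -/
theorem stmt9 (n : ℕ) (hn : 4 ≤ n) (heven : Even n) (Γ : Subgroup SL2)
    (hΓ : ∀ g : SL2, g ∈ Γ ↔ ∃ ε : ℂ, ε ^ (2 * (n - 2)) = 1 ∧
      ((g : Matrix (Fin 2) (Fin 2) ℂ) = !![ε, 0; 0, ε⁻¹] ∨
       (g : Matrix (Fin 2) (Fin 2) ℂ) = !![0, ε; -ε⁻¹, 0]))
    (hx : (X 0 : P2) ^ 2 * (X 1 : P2) ^ 2 ∈ invRing Γ)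
    (hy : MvPolynomial.C (-(1/4) : ℂ) *
      ((X 0 : P2) ^ (2 * n - 4) - 2 * (X 0 : P2) ^ (n - 2) * (X 1 : P2) ^ (n - 2)
        + (X 1 : P2) ^ (2 * n - 4)) ∈ invRing Γ)
    (hz : MvPolynomial.C ((1/4) : ℂ) *
      ((X 0 : P2) * (X 1 : P2) * ((X 0 : P2) ^ (2 * n - 4) - (X 1 : P2) ^ (2 * n - 4)))
        ∈ invRing Γ) :
    let x : invRing Γ := ⟨(X 0 : P2) ^ 2 * (X 1 : P2) ^ 2, hx⟩
    let y : invRing Γ := ⟨MvPolynomial.C (-(1/4) : ℂ) *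
      ((X 0 : P2) ^ (2 * n - 4) - 2 * (X 0 : P2) ^ (n - 2) * (X 1 : P2) ^ (n - 2)
        + (X 1 : P2) ^ (2 * n - 4)), hy⟩
    let z : invRing Γ := ⟨MvPolynomial.C ((1/4) : ℂ) *
      ((X 0 : P2) * (X 1 : P2) * ((X 0 : P2) ^ (2 * n - 4) - (X 1 : P2) ^ (2 * n - 4))), hz⟩
    -- (I) θ(x) = x, θ(y) = y, θ(z) = -z
    (∀ θ : invRing Γ ≃ₐ[ℂ] invRing Γ, IsAntiPoissonInv Γ θ → Vals Γ θ x y z x y (-z) →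
      Jideal Γ θ = Ideal.span {z} ∧
      IsReduced ((invRing Γ) ⧸ Jideal Γ θ) ∧
      ∃ e : ((invRing Γ) ⧸ Jideal Γ θ) ≃ₐ[ℂ]
          (P2 ⧸ Ideal.span {(X 0 : P2) * X 1 * ((X 1 : P2) - (X 0 : P2) ^ ((n - 2) / 2))}),
        e (Ideal.Quotient.mk (Jideal Γ θ) x) =
          Ideal.Quotient.mk
            (Ideal.span {(X 0 : P2) * X 1 * ((X 1 : P2) - (X 0 : P2) ^ ((n - 2) / 2))}) (X 0) ∧
        e (Ideal.Quotient.mk (Jideal Γ θ) y) =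
          Ideal.Quotient.mk
            (Ideal.span {(X 0 : P2) * X 1 * ((X 1 : P2) - (X 0 : P2) ^ ((n - 2) / 2))}) (X 1)) ∧
    -- (II) θ(x) = x, θ(y) = x^{(n-2)/2} - y, θ(z) = z
    (∀ θ : invRing Γ ≃ₐ[ℂ] invRing Γ, IsAntiPoissonInv Γ θ →
        Vals Γ θ x y z x (x ^ ((n - 2) / 2) - y) z →
      Jideal Γ θ = Ideal.span {2 * y - x ^ ((n - 2) / 2)} ∧
      IsReduced ((invRing Γ) ⧸ Jideal Γ θ) ∧
      ∃ e : ((invRing Γ) ⧸ Jideal Γ θ) ≃ₐ[ℂ]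
          (P2 ⧸ Ideal.span {(X 0 : P2) ^ (n - 1) + 4 * (X 1 : P2) ^ 2}),
        e (Ideal.Quotient.mk (Jideal Γ θ) x) =
          Ideal.Quotient.mk (Ideal.span {(X 0 : P2) ^ (n - 1) + 4 * (X 1 : P2) ^ 2}) (X 0) ∧
        e (Ideal.Quotient.mk (Jideal Γ θ) z) =
          Ideal.Quotient.mk (Ideal.span {(X 0 : P2) ^ (n - 1) + 4 * (X 1 : P2) ^ 2}) (X 1)) := by
  obtain ⟨r, rfl⟩ := heven
  obtain ⟨k, rfl⟩ : ∃ k, r = k + 1 := ⟨r - 1, by omega⟩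
  have hk : 0 < k := by omega
  have e0 : 2 * (k + 1 + (k + 1) - 2) = 4 * k := by omega
  have e1 : 2 * (k + 1 + (k + 1)) - 4 = 4 * k := by omega
  have e2 : k + 1 + (k + 1) - 2 = 2 * k := by omega
  have e3 : (k + 1 + (k + 1) - 2) / 2 = k := by omega
  have e4 : k + 1 + (k + 1) - 1 = 2 * k + 1 := by omega
  rw [e0] at hΓ
  revert hx hy hz
  rw [e3, e1, e2, e4]
  intro hx hy hz x y z
  let φ : P2 →ₐ[ℂ] invRing Γ := aeval ![x, y]
  have φ0 : φ (X 0) = x := by simp [φ]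
  have φ1 : φ (X 1) = y := by simp [φ]
  have hφ : ∀ A, (φ A : P2) = phi k A := by
    intro A
    have : (invRing Γ).val.comp φ = phi k := by
      apply MvPolynomial.algHom_ext
      intro i
      fin_cases i
      · simp only [Fin.zero_eta, AlgHom.comp_apply, φ0, phi_X0]; rfl
      · simp only [Fin.mk_one, AlgHom.comp_apply, φ1, phi_X1]; rfl
    exact DFunLike.congr_fun this A
  have hzP : (z : P2) = zP k := rfl
  have hsq : z ^ 2 = φ (X 0 * X 1 * (X 1 - X 0 ^ k)) := by
    apply Subtype.ext
    rw [hφ, ← zP_sq]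
    rfl
  have hex : ∀ f, ∃ A B, f = φ A + z * φ B := by
    intro f
    obtain ⟨A, B, h⟩ := dec_of_mem k hk Γ hΓ f f.2
    refine ⟨A, B, Subtype.ext ?_⟩
    simp only [Subalgebra.coe_add, Subalgebra.coe_mul, hφ, hzP, h]
  have huniq : ∀ A B, φ A + z * φ B = 0 → A = 0 ∧ B = 0 := by
    intro A B h
    apply phi_uniq k hk
    have h' := congrArg (Subtype.val) h
    simpa only [Subalgebra.coe_add, Subalgebra.coe_mul, hφ, hzP, Subalgebra.coe_zero] using h'
  constructor
  · rintro θ - ⟨hθx, hθy, hθz⟩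
    have hθφ : ∀ A, θ (φ A) = φ A := by
      intro A
      have : (θ : invRing Γ →ₐ[ℂ] invRing Γ).comp φ = φ := by
        apply MvPolynomial.algHom_ext
        intro i
        fin_cases i
        · change θ (φ (X 0)) = φ (X 0)
          rw [φ0, hθx]
        · change θ (φ (X 1)) = φ (X 1)
          rw [φ1, hθy]
      exact DFunLike.congr_fun this A
    obtain ⟨hJ, e, he⟩ := partI φ z _ hsq hex huniq θ hθφ hθz
    have he0 := he (X 0)
    have he1 := he (X 1)
    rw [φ0] at he0
    rw [φ1] at he1
    refine ⟨hJ, ?_, e, he0, he1⟩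
    have := (Ideal.isRadical_iff_quotient_reduced _).1
      (isRadical_iff_span_singleton.1 (radical_D k hk))
    exact isReduced_of_injective e e.injective
  · rintro θ - ⟨hθx, hθy, hθz⟩
    obtain ⟨hJ, e, he0, he1⟩ := partII k φ z hsq hex huniq θ (by rw [φ0, hθx])
      (by rw [φ0, φ1, hθy]) hθz
    rw [φ0, φ1] at hJ
    rw [φ0] at he0
    refine ⟨hJ, ?_, e, he0, he1⟩
    have := (Ideal.isRadical_iff_quotient_reduced _).1
      (isRadical_iff_span_singleton.1 (fun N P h => prime_E k P N h))
    exact isReduced_of_injective e e.injective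
end
end
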